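/- arXiv:1405.1601 — 3 statements merged into one kernel-verified Lean document; each statement's English description precedes it below -/
import Mathlib

section
/- Suppose max{k, 2} ≤ m ≤ ⌊n/2⌋ and k ≥ 1. Then m(K^k_{n-m,m}, t) ≤ m(K^k_{n-1,1}, t) for all t = 0, 1, …, ⌊n/2⌋, and m(K^k_{n-m,m}, 1) < m(K^k_{n-1,1}, 1); that is, K^k_{n-m,m} ≺ K^k_{n-1,1} in the matching quasi-order. -/
/-- `matchCount G t` is the number of `t`-matchings of `G`, i.e. the number of
`t`-element sets of pairwise disjoint edges of `G`. -/
noncomputable def matchCount {V : Type*} (G : SimpleGraph V) (t : ℕ) : ℕ :=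
  Nat.card {s : Finset (Sym2 V) // ↑s ⊆ G.edgeSet ∧ s.card = t ∧
    (s : Set (Sym2 V)).Pairwise fun e f => ∀ v, ¬(v ∈ e ∧ v ∈ f)}

/-- The edge connectivity of a graph: the minimum number of edges whose
deletion disconnects the graph. -/
noncomputable def edgeConn {V : Type*} (G : SimpleGraph V) : ℕ :=
  sInf {j | ∃ F : Set (Sym2 V), F ⊆ G.edgeSet ∧ F.ncard = j ∧ ¬(G.deleteEdges F).Connected}

/-- The edge cut `∂(S)`: the set of edges of `G` with exactly one endpoint in `S`. -/
def edgeCut {V : Type*} (G : SimpleGraph V) (S : Set V) : Set (Sym2 V) :=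
  {e | e ∈ G.edgeSet ∧ ∃ u ∈ S, ∃ v, v ∉ S ∧ e = s(u, v)}

/-- `Kstar n k` is the graph `K^k_{n-1,1}`: obtained from `K_1 ∪ K_{n-1}` by adding
`k` edges joining the vertex of `K_1` (vertex `n-1`) to `k` distinct vertices of `K_{n-1}`. -/
def Kstar (n k : ℕ) : SimpleGraph (Fin n) :=
  SimpleGraph.fromRel (fun u v =>
    (u.val < n - 1 ∧ v.val < n - 1) ∨ (u.val < k ∧ v.val = n - 1))

/-- `Kmk n m k` is the graph `K^k_{n-m,m}`: obtained from `K_{n-m} ∪ K_m` by adding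
`k` independent edges between the two parts. -/
def Kmk (n m k : ℕ) : SimpleGraph (Fin n) :=
  SimpleGraph.fromRel (fun u v =>
    (u.val < n - m ∧ v.val < n - m) ∨ (n - m ≤ u.val ∧ n - m ≤ v.val) ∨
    (u.val < k ∧ v.val = n - m + u.val))

/-- The Hosoya index: the total number of matchings of `G`. -/
noncomputable def hosoya {V : Type*} [Fintype V] (G : SimpleGraph V) : ℕ :=
  ∑ t ∈ Finset.range (Fintype.card V / 2 + 1), matchCount G t

/-- `t`-matchings as a set of finsets. -/
def Mat {V : Type*} (G : SimpleGraph V) (t : ℕ) : Set (Finset (Sym2 V)) :=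
  {s | ↑s ⊆ G.edgeSet ∧ s.card = t ∧
    (s : Set (Sym2 V)).Pairwise fun e f => ∀ v, ¬(v ∈ e ∧ v ∈ f)}

theorem matchCount_eq {V : Type*} (G : SimpleGraph V) (t : ℕ) :
    matchCount G t = (Mat G t).ncard := rfl

theorem Mat.adj {V : Type*} {G : SimpleGraph V} {t : ℕ} {s : Finset (Sym2 V)}
    (h : s ∈ Mat G t) {a b : V} (hab : s(a, b) ∈ s) : G.Adj a b := h.1 hab

theorem Mat.uniq {V : Type*} {G : SimpleGraph V} {t : ℕ} {s : Finset (Sym2 V)}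
    (h : s ∈ Mat G t) {a b c : V} (hab : s(a, b) ∈ s) (hac : s(a, c) ∈ s) : b = c := by
  by_contra hne
  have := h.2.2 (Finset.mem_coe.2 hab) (Finset.mem_coe.2 hac) (by
    intro h'; exact hne (Sym2.congr_right.1 h')) a
  simp at this

theorem Mat.mono {V : Type*} {G H : SimpleGraph V} {t : ℕ} {s : Finset (Sym2 V)}
    (h : s ∈ Mat G t) (hH : ∀ a b, s(a, b) ∈ s → H.Adj a b) : s ∈ Mat H t := by
  refine ⟨?_, h.2⟩
  intro e he
  induction e with
  | h a b => exact hH a b he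

/-- action of a permutation -/
def act {V : Type*} [DecidableEq V] (σ : Equiv.Perm V) (s : Finset (Sym2 V)) :
    Finset (Sym2 V) := s.image (Sym2.map σ)

theorem mem_act {V : Type*} [DecidableEq V] (σ : Equiv.Perm V) (s : Finset (Sym2 V)) (a b : V) :
    s(a, b) ∈ act σ s ↔ s(σ.symm a, σ.symm b) ∈ s := by
  unfold act
  rw [Finset.mem_image]
  constructor
  · rintro ⟨e, he, h⟩
    have : e = Sym2.map σ.symm s(a, b) := by
      rw [← h, Sym2.map_map]; simp
    rw [this] at he
    simpa using he
  · intro h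
    exact ⟨_, h, by simp⟩

theorem act_inj {V : Type*} [DecidableEq V] (σ : Equiv.Perm V) :
    Function.Injective (act σ) :=
  Finset.image_injective (Sym2.map.injective σ.injective)

theorem act_mat {V : Type*} [DecidableEq V] (σ : Equiv.Perm V) {G H : SimpleGraph V} {t : ℕ}
    {s : Finset (Sym2 V)} (h : s ∈ Mat G t)
    (hH : ∀ a b, s(a, b) ∈ s → H.Adj (σ a) (σ b)) : act σ s ∈ Mat H t := by
  refine ⟨?_, ?_, ?_⟩
  · intro e he
    induction e with
    | h a b =>
      have := hH _ _ ((mem_act σ s a b).1 he)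
      simpa using this
  · unfold act
    rw [Finset.card_image_of_injective _ (Sym2.map.injective σ.injective)]
    exact h.2.1
  · intro e he f hf hne v hv
    unfold act at he hf
    simp only [Finset.coe_image, Set.mem_image] at he hf
    obtain ⟨e', he', rfl⟩ := he
    obtain ⟨f', hf', rfl⟩ := hf
    refine h.2.2 he' hf' (fun h' => hne (by rw [h'])) (σ.symm v) ?_
    obtain ⟨h1, h2⟩ := hv
    rw [Sym2.mem_map] at h1 h2
    obtain ⟨a, ha, rfl⟩ := h1
    obtain ⟨b, hb, hab⟩ := h2
    have : b = a := σ.injective hab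
    subst this
    simpa using ⟨ha, hb⟩

/-- injection by a relation -/
theorem rel_le {α : Type*} [Finite α] (A B : Set α) (R : α → α → Prop)
    (h1 : ∀ a ∈ A, ∃ b ∈ B, R a b)
    (h2 : ∀ a ∈ A, ∀ a' ∈ A, ∀ b ∈ B, R a b → R a' b → a = a') :
    A.ncard ≤ B.ncard ∧ ((∃ b ∈ B, ∀ a ∈ A, ¬ R a b) → A.ncard < B.ncard) := by
  choose! f hf using h1
  have hinj : Set.InjOn f A := by
    intro a ha a' ha' h
    exact h2 a ha a' ha' (f a) (hf a ha).1 (hf a ha).2 (h ▸ (hf a' ha').2)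
  have himg : f '' A ⊆ B := by
    rintro _ ⟨a, ha, rfl⟩; exact (hf a ha).1
  refine ⟨?_, ?_⟩
  · rw [← Set.InjOn.ncard_image hinj]
    exact Set.ncard_le_ncard himg (Set.toFinite _)
  · rintro ⟨b, hb, hn⟩
    rw [← Set.InjOn.ncard_image hinj]
    refine Set.ncard_lt_ncard ⟨himg, fun h => ?_⟩ (Set.toFinite _)
    obtain ⟨a, ha, rfl⟩ := h hb
    exact hn a ha (hf a ha).2

/-- The star-type graph with centre `c`. -/
def Hst (n : ℕ) (c : Fin n) (k : ℕ) : SimpleGraph (Fin n) :=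
  SimpleGraph.fromRel (fun u v => (u ≠ c ∧ v ≠ c) ∨ (u.val < k ∧ v = c))

theorem Hst_adj (n : ℕ) (c : Fin n) (k : ℕ) (a b : Fin n) :
    (Hst n c k).Adj a b ↔ a ≠ b ∧ ((a ≠ c ∧ b ≠ c) ∨ (a.val < k ∧ b = c) ∨
      (b.val < k ∧ a = c)) := by
  simp only [Hst, SimpleGraph.fromRel_adj]; tauto

theorem Kmk_adj (n m k : ℕ) (a b : Fin n) :
    (Kmk n m k).Adj a b ↔ a.val ≠ b.val ∧ ((a.val < n - m ∧ b.val < n - m) ∨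
      (n - m ≤ a.val ∧ n - m ≤ b.val) ∨
      (a.val < k ∧ b.val = n - m + a.val) ∨ (b.val < k ∧ a.val = n - m + b.val)) := by
  simp only [Kmk, SimpleGraph.fromRel_adj, Ne, Fin.ext_iff]; tauto

theorem Kstar_adj (n k : ℕ) (a b : Fin n) :
    (Kstar n k).Adj a b ↔ a.val ≠ b.val ∧ ((a.val < n - 1 ∧ b.val < n - 1) ∨
      (a.val < k ∧ b.val = n - 1) ∨ (b.val < k ∧ a.val = n - 1)) := by
  simp only [Kstar, SimpleGraph.fromRel_adj, Ne, Fin.ext_iff]; tauto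

theorem base_case (n m : ℕ) (hm1 : 2 ≤ m) (hm2 : m ≤ n / 2) (c : Fin n) (hc : c.val = n - m)
    (t : ℕ) : (Mat (Kmk n m 1) t).ncard ≤ (Mat (Hst n c 1) t).ncard ∧
      (t = 1 → (Mat (Kmk n m 1) t).ncard < (Mat (Hst n c 1) t).ncard) := by
  have hn : 0 < n := by omega
  obtain ⟨u, hu⟩ : ∃ u : Fin n, u.val = 0 := ⟨⟨0, hn⟩, rfl⟩
  have huc : u ≠ c := by rw [Ne, Fin.ext_iff]; omega
  have key := rel_le (Mat (Kmk n m 1) t) (Mat (Hst n c 1) t)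
    (fun s s' => ∃ w, s' = act (Equiv.swap u w) s ∧
      (w = u ∨ (w = c ∧ ∃ y : Fin n, n - m < y.val ∧ s(u, y) ∈ s') ∨
       (n - m < w.val ∧ s(u, c) ∈ s' ∧ ∃ x : Fin n, x.val < n - m ∧ x ≠ u ∧ s(w, x) ∈ s')))
    ?_ ?_
  · refine ⟨key.1, fun ht => key.2 ?_⟩
    subst ht
    obtain ⟨p, hp⟩ : ∃ u : Fin n, u.val = 1 := ⟨⟨1, by omega⟩, rfl⟩
    obtain ⟨q, hq⟩ : ∃ u : Fin n, u.val = n - 1 := ⟨⟨n - 1, by omega⟩, rfl⟩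
    refine ⟨{s(p, q)}, ⟨?_, by simp, by simp⟩, ?_⟩
    · intro e he
      simp only [Finset.coe_singleton, Set.mem_singleton_iff] at he
      subst he
      rw [SimpleGraph.mem_edgeSet, Hst_adj]
      simp only [Ne, Fin.ext_iff]
      omega
    · rintro s hs ⟨w, hw, h | ⟨-, y, -, h⟩ | ⟨-, h, -⟩⟩
      · subst h
        have : s(p, q) ∈ s := by
          have h1 : s(p, q) ∈ act (Equiv.swap w w) s := by rw [← hw]; simp
          rw [mem_act] at h1
          simpa using h1
        have := Mat.adj hs this
        rw [Kmk_adj] at this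
        omega
      · simp only [Finset.mem_singleton, Sym2.eq_iff, Fin.ext_iff] at h
        omega
      · simp only [Finset.mem_singleton, Sym2.eq_iff, Fin.ext_iff] at h
        omega
  · intro s hs
    by_cases hw : ∃ w, w ≠ u ∧ s(c, w) ∈ s
    · obtain ⟨w, hwu, hcw⟩ := hw
      have hw1 := Mat.adj hs hcw
      rw [Kmk_adj] at hw1
      have hwv : n - m < w.val := by
        rw [Ne, Fin.ext_iff] at hwu; omega
      have hwc : w ≠ c := by rw [Ne, Fin.ext_iff]; omega
      by_cases hx : ∃ x, s(u, x) ∈ s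
      · obtain ⟨x, hux⟩ := hx
        have hx1 := Mat.adj hs hux
        rw [Kmk_adj] at hx1
        have hxc : x ≠ c := by
          rintro rfl
          rw [Sym2.eq_swap] at hux
          exact hwu (Mat.uniq hs hcw hux)
        have hxv : x.val < n - m := by
          rw [Ne, Fin.ext_iff] at hxc; omega
        have hxu : x ≠ u := by rw [Ne, Fin.ext_iff]; omega
        have hxw : x ≠ w := by rw [Ne, Fin.ext_iff]; omega
        refine ⟨act (Equiv.swap u w) s, act_mat _ hs ?_, w, rfl, Or.inr (Or.inr ⟨hwv, ?_, x, hxv, hxu, ?_⟩)⟩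
        · intro a b hab
          have hne := Mat.adj hs hab |>.ne
          rw [Hst_adj]
          refine ⟨fun h => hne ((Equiv.swap u w).injective h), ?_⟩
          by_cases ha : a = c
          · subst ha
            have := Mat.uniq hs hab hcw
            subst this
            right; right
            rw [Equiv.swap_apply_right, Equiv.swap_apply_of_ne_of_ne huc.symm hwc.symm]
            exact ⟨by omega, rfl⟩
          · by_cases hb : b = c
            · subst hb
              rw [Sym2.eq_swap] at hab
              have := Mat.uniq hs hab hcw
              subst this
              right; left
              rw [Equiv.swap_apply_right, Equiv.swap_apply_of_ne_of_ne huc.symm hwc.symm]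
              exact ⟨by omega, rfl⟩
            · left
              have hcfix : Equiv.swap u w c = c :=
                Equiv.swap_apply_of_ne_of_ne huc.symm hwc.symm
              constructor
              · intro h; exact ha ((Equiv.swap u w).injective (h.trans hcfix.symm))
              · intro h; exact hb ((Equiv.swap u w).injective (h.trans hcfix.symm))
        · rw [mem_act, Equiv.symm_swap, Equiv.swap_apply_left,
            Equiv.swap_apply_of_ne_of_ne huc.symm hwc.symm, Sym2.eq_swap]
          exact hcw
        · rw [mem_act, Equiv.symm_swap, Equiv.swap_apply_right,
            Equiv.swap_apply_of_ne_of_ne hxu hxw]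
          exact hux
      · push Not at hx
        refine ⟨act (Equiv.swap u c) s, act_mat _ hs ?_, c, rfl, Or.inr (Or.inl ⟨rfl, w, hwv, ?_⟩)⟩
        · intro a b hab
          have hne := Mat.adj hs hab |>.ne
          rw [Hst_adj]
          refine ⟨fun h => hne ((Equiv.swap u c).injective h), ?_⟩
          left
          have hau : a ≠ u := by rintro rfl; exact hx _ hab
          have hbu : b ≠ u := by rintro rfl; rw [Sym2.eq_swap] at hab; exact hx _ hab
          have hcfix : Equiv.swap u c u = c := Equiv.swap_apply_left _ _
          constructor
          · intro h; exact hau ((Equiv.swap u c).injective (h.trans hcfix.symm))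
          · intro h; exact hbu ((Equiv.swap u c).injective (h.trans hcfix.symm))
        · rw [mem_act, Equiv.symm_swap, Equiv.swap_apply_left,
            Equiv.swap_apply_of_ne_of_ne hwu hwc]
          exact hcw
    · push Not at hw
      refine ⟨act (Equiv.swap u u) s, act_mat _ hs ?_, u, rfl, Or.inl rfl⟩
      intro a b hab
      have hadj := Mat.adj hs hab
      simp only [Equiv.swap_self, Equiv.refl_apply]
      rw [Hst_adj]
      refine ⟨hadj.ne, ?_⟩
      by_cases ha : a = c
      · subst ha
        have : b = u := by by_contra h; exact hw b h hab
        subst this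
        right; right; exact ⟨by omega, rfl⟩
      · by_cases hb : b = c
        · subst hb
          rw [Sym2.eq_swap] at hab
          have : a = u := by by_contra h; exact hw a h hab
          subst this
          right; left; exact ⟨by omega, rfl⟩
        · exact Or.inl ⟨ha, hb⟩
  · have hX : ∀ s ∈ Mat (Kmk n m 1) t, ∀ y : Fin n, n - m < y.val → s(u, y) ∉ s := by
      intro s hs y hy h
      have := Mat.adj hs h
      rw [Kmk_adj] at this
      omega
    have hX' : ∀ s ∈ Mat (Kmk n m 1) t, ∀ y x : Fin n, n - m < y.val → x.val < n - m →
        s(y, x) ∉ s := by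
      intro s hs y x hy hx h
      have := Mat.adj hs h
      rw [Kmk_adj] at this
      omega
    have hid : ∀ s : Finset (Sym2 (Fin n)), act (Equiv.swap u u) s = s := by
      intro s; ext e
      induction e with
      | h a b => rw [mem_act]; simp
    have hYZ : ∀ b ∈ Mat (Hst n c 1) t, ∀ y : Fin n, n - m < y.val → s(u, y) ∈ b →
        s(u, c) ∈ b → False := by
      intro b hb y hy h1 h2
      have := Mat.uniq hb h1 h2
      rw [this] at hy; omega
    rintro s hs s' hs' b hb ⟨w, hw, h⟩ ⟨w', hw', h'⟩
    suffices w = w' by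
      subst this
      exact act_inj _ (hw.symm.trans hw')
    rcases h with rfl | ⟨rfl, y, hy, h⟩ | ⟨hwv, h, x, hx, hxu, hwx⟩
    · rw [hid] at hw
      rcases h' with rfl | ⟨rfl, y', hy', h'⟩ | ⟨hwv', h', x', hx', hxu', hwx'⟩
      · rfl
      · exact absurd (hw ▸ h') (hX s hs y' hy')
      · exact absurd (hw ▸ hwx') (hX' s hs _ _ hwv' hx')
    · rcases h' with rfl | ⟨rfl, y', hy', h'⟩ | ⟨hwv', h', x', hx', hxu', hwx'⟩
      · rw [hid] at hw'
        exact absurd (hw' ▸ h) (hX s' hs' y hy)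
      · rfl
      · exact (hYZ b hb y hy h h').elim
    · rcases h' with rfl | ⟨rfl, y', hy', h'⟩ | ⟨hwv', h', x', hx', hxu', hwx'⟩
      · rw [hid] at hw'
        exact absurd (hw' ▸ hwx) (hX' s' hs' _ _ hwv hx)
      · exact (hYZ b hb y' hy' h' h).elim
      · by_contra hne
        rw [hw, mem_act, Equiv.symm_swap] at hwx'
        rw [Equiv.swap_apply_of_ne_of_ne (by rw [Ne, Fin.ext_iff]; omega) (Ne.symm hne),
          Equiv.swap_apply_of_ne_of_ne hxu' (by rw [Ne, Fin.ext_iff]; omega)] at hwx'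
        exact hX' s hs _ _ hwv' hx' hwx'

theorem split_le {α : Type*} [Finite α] (A B A' B' : Set α) (P Q : α → Prop)
    (hA : ∀ a ∈ A, ¬ P a → a ∈ A') (hB' : ∀ b ∈ B', b ∈ B ∧ ¬ Q b)
    (f : α → α) (hf : Function.Injective f) (hPQ : ∀ a ∈ A, P a → f a ∈ B ∧ Q (f a)) :
    (A'.ncard ≤ B'.ncard → A.ncard ≤ B.ncard) ∧ (A'.ncard < B'.ncard → A.ncard < B.ncard) := by
  have h1 : A.ncard ≤ A'.ncard + {a ∈ A | P a}.ncard := by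
    refine le_trans (Set.ncard_le_ncard (t := A' ∪ {a ∈ A | P a}) ?_ (Set.toFinite _))
      (Set.ncard_union_le _ _)
    intro a ha
    by_cases h : P a
    · exact Or.inr ⟨ha, h⟩
    · exact Or.inl (hA a ha h)
  have h2 : B'.ncard + {b ∈ B | Q b}.ncard ≤ B.ncard := by
    rw [← Set.ncard_union_eq ?_ (Set.toFinite _) (Set.toFinite _)]
    · refine Set.ncard_le_ncard ?_ (Set.toFinite _)
      rintro b (hb | hb)
      · exact (hB' b hb).1
      · exact hb.1
    · rw [Set.disjoint_left]
      intro b hb hb2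
      exact (hB' b hb).2 hb2.2
  have h3 : {a ∈ A | P a}.ncard ≤ {b ∈ B | Q b}.ncard := by
    rw [← Set.ncard_image_of_injective _ hf]
    refine Set.ncard_le_ncard ?_ (Set.toFinite _)
    rintro _ ⟨a, ⟨ha, hp⟩, rfl⟩
    exact hPQ a ha hp
  omega

theorem step_case (n m k : ℕ) (hk : 1 ≤ k) (hkm : k + 1 ≤ m) (hm2 : m ≤ n / 2) (c : Fin n)
    (hc : c.val = n - m) (t : ℕ) :
    ((Mat (Kmk n m k) t).ncard ≤ (Mat (Hst n c k) t).ncard →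
      (Mat (Kmk n m (k + 1)) t).ncard ≤ (Mat (Hst n c (k + 1)) t).ncard) ∧
    ((Mat (Kmk n m k) t).ncard < (Mat (Hst n c k) t).ncard →
      (Mat (Kmk n m (k + 1)) t).ncard < (Mat (Hst n c (k + 1)) t).ncard) := by
  obtain ⟨p, hp⟩ : ∃ u : Fin n, u.val = k := ⟨⟨k, by omega⟩, rfl⟩
  obtain ⟨q, hq⟩ : ∃ u : Fin n, u.val = n - m + k := ⟨⟨n - m + k, by omega⟩, rfl⟩
  have hpc : p ≠ c := by rw [Ne, Fin.ext_iff]; omega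
  have hpq : p ≠ q := by rw [Ne, Fin.ext_iff]; omega
  refine split_le _ _ _ _ (fun s => s(q, p) ∈ s) (fun s => s(c, p) ∈ s) ?_ ?_
    (act (Equiv.swap q c)) (act_inj _) ?_
  · intro s hs hn
    refine Mat.mono hs ?_
    intro a b hab
    have h := Mat.adj hs hab
    have h1 : ¬ (a = q ∧ b = p) := by rintro ⟨rfl, rfl⟩; exact hn hab
    have h2 : ¬ (a = p ∧ b = q) := by
      rintro ⟨rfl, rfl⟩; rw [Sym2.eq_swap] at hab; exact hn hab
    rw [Kmk_adj] at h ⊢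
    simp only [Fin.ext_iff] at h1 h2
    omega
  · intro s hs
    refine ⟨Mat.mono hs ?_, ?_⟩
    · intro a b hab
      have h := Mat.adj hs hab
      rw [Hst_adj] at h ⊢
      simp only [Ne, Fin.ext_iff] at h ⊢
      omega
    · intro h
      have h := Mat.adj hs h
      rw [Hst_adj] at h
      rcases h with ⟨-, ⟨h, -⟩ | ⟨-, h⟩ | ⟨h, -⟩⟩
      · exact h rfl
      · exact hpc h
      · omega
  · intro s hs hqp
    refine ⟨act_mat _ hs ?_, ?_⟩
    · intro a b hab
      have hne := (Mat.adj hs hab).ne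
      rw [Hst_adj]
      refine ⟨fun h => hne ((Equiv.swap q c).injective h), ?_⟩
      have hfix : Equiv.swap q c p = p := Equiv.swap_apply_of_ne_of_ne hpq hpc
      have hqc : Equiv.swap q c q = c := Equiv.swap_apply_left _ _
      by_cases ha : a = q
      · subst ha
        have := Mat.uniq hs hab hqp
        subst this
        right; right
        rw [hfix, hqc]
        exact ⟨by omega, rfl⟩
      · by_cases hb : b = q
        · subst hb
          rw [Sym2.eq_swap] at hab
          have := Mat.uniq hs hab hqp
          subst this
          right; left
          rw [hfix, hqc]
          exact ⟨by omega, rfl⟩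
        · left
          constructor
          · intro h; exact ha ((Equiv.swap q c).injective (h.trans hqc.symm))
          · intro h; exact hb ((Equiv.swap q c).injective (h.trans hqc.symm))
    · rw [mem_act, Equiv.symm_swap, Equiv.swap_apply_right,
        Equiv.swap_apply_of_ne_of_ne hpq hpc]
      exact hqp

theorem all_case (n m k : ℕ) (hk : 1 ≤ k) (hkm : k ≤ m) (hm1 : 2 ≤ m) (hm2 : m ≤ n / 2)
    (c : Fin n) (hc : c.val = n - m) (t : ℕ) :
    (Mat (Kmk n m k) t).ncard ≤ (Mat (Hst n c k) t).ncard ∧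
      (t = 1 → (Mat (Kmk n m k) t).ncard < (Mat (Hst n c k) t).ncard) := by
  induction k, hk using Nat.le_induction with
  | base => exact base_case n m hm1 hm2 c hc t
  | succ k hk ih =>
    have ih := ih (by omega)
    have st := step_case n m k hk hkm hm2 c hc t
    exact ⟨st.1 ih.1, fun ht => st.2 (ih.2 ht)⟩

theorem Hst_le (n m k : ℕ) (hkm : k ≤ m) (hm1 : 2 ≤ m) (hm2 : m ≤ n / 2)
    (c : Fin n) (hc : c.val = n - m) (t : ℕ) :
    (Mat (Hst n c k) t).ncard ≤ (Mat (Kstar n k) t).ncard := by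
  obtain ⟨q, hq⟩ : ∃ u : Fin n, u.val = n - 1 := ⟨⟨n - 1, by omega⟩, rfl⟩
  rw [← Set.ncard_image_of_injective _ (act_inj (Equiv.swap c q))]
  refine Set.ncard_le_ncard ?_ (Set.toFinite _)
  rintro _ ⟨s, hs, rfl⟩
  refine act_mat _ hs ?_
  intro a b hab
  have h := Mat.adj hs hab
  rw [Hst_adj] at h
  have hv : ∀ x : Fin n, (x = c ∧ (Equiv.swap c q x).val = n - 1) ∨
      (x.val = n - 1 ∧ x ≠ c ∧ (Equiv.swap c q x).val = n - m) ∨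
      (x.val ≠ n - 1 ∧ x ≠ c ∧ (Equiv.swap c q x).val = x.val) := by
    intro x
    by_cases h1 : x = c
    · left; subst h1; simp [hq]
    · by_cases h2 : x = q
      · right; left; subst h2; simp [hq, hc, h1]
      · right; right
        rw [Equiv.swap_apply_of_ne_of_ne h1 h2]
        refine ⟨fun h => h2 (Fin.ext (h.trans hq.symm)), h1, rfl⟩
  have ha := hv a
  have hb := hv b
  rw [Kstar_adj]
  simp only [Ne, Fin.ext_iff] at h ha hb
  omega

/-- For `max{k,2} ≤ m ≤ ⌊n/2⌋` and `k ≥ 1`: `m(K^k_{n-m,m},t) ≤ m(K^k_{n-1,1},t)` for all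
`t ≤ ⌊n/2⌋` and `m(K^k_{n-m,m},1) < m(K^k_{n-1,1},1)`, i.e. `K^k_{n-m,m} ≺ K^k_{n-1,1}`. -/
theorem stmt16 (n m k : ℕ) (hk : 1 ≤ k) (hm1 : max k 2 ≤ m) (hm2 : m ≤ n / 2) :
    (∀ t : ℕ, t ≤ n / 2 → matchCount (Kmk n m k) t ≤ matchCount (Kstar n k) t) ∧
    matchCount (Kmk n m k) 1 < matchCount (Kstar n k) 1 := by
  have hkm : k ≤ m := le_trans (le_max_left _ _) hm1
  have hm : 2 ≤ m := le_trans (le_max_right _ _) hm1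
  have hlt : n - m < n := by omega
  simp only [matchCount_eq]
  have h1 := fun t => all_case n m k hk hkm hm hm2 ⟨n - m, hlt⟩ rfl t
  have h2 := fun t => Hst_le n m k hkm hm hm2 ⟨n - m, hlt⟩ rfl t
  exact ⟨fun t _ => (h1 t).1.trans (h2 t), ((h1 1).2 rfl).trans_le (h2 1)⟩
end

section
/- Let G be a connected simple graph of order n ≥ 2 with edge connectivity k (1 ≤ k ≤ n − 1) that is not isomorphic to K^k_{n-1,1}. Then m(G,t) ≤ m(K^k_{n-1,1}, t) for all t = 0, 1, …, ⌊n/2⌋, with strict inequality for at least one t. -/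
/-- the matching condition -/
def IsMat {V : Type*} (s : Finset (Sym2 V)) : Prop :=
  (s : Set (Sym2 V)).Pairwise fun e f => ∀ v, ¬(v ∈ e ∧ v ∈ f)

theorem IsMat.eq {V : Type*} {s : Finset (Sym2 V)} (h : IsMat s) {v a b : V}
    (ha : s(v, a) ∈ s) (hb : s(v, b) ∈ s) : a = b := by
  by_contra hne
  have hne' : s(v, a) ≠ s(v, b) := by
    intro h; exact hne (Sym2.congr_right.1 h)
  exact h (by exact_mod_cast ha) (by exact_mod_cast hb) hne' v ⟨by simp, by simp⟩

theorem IsMat.map {V W : Type*} {s : Finset (Sym2 V)} (h : IsMat s) (f : V ↪ W) :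
    IsMat (s.map f.sym2Map) := by
  intro e he e' he' hne v hv
  simp only [Finset.coe_map, Set.mem_image, Finset.mem_coe] at he he'
  obtain ⟨a, ha, rfl⟩ := he
  obtain ⟨b, hb, rfl⟩ := he'
  simp only [Function.Embedding.sym2Map_apply, Sym2.mem_map] at hv
  obtain ⟨⟨c, hc, rfl⟩, d, hd, hcd⟩ := hv
  have : d = c := f.injective hcd
  subst this
  exact h ha hb (fun h => hne (by rw [h])) d ⟨hc, hd⟩

open Classical in
/-- partner -/
noncomputable def partner {V : Type*} (s : Finset (Sym2 V)) (v : V) : V :=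
  if h : ∃ w, s(v, w) ∈ s then h.choose else v

theorem partner_iff {V : Type*} {G : SimpleGraph V} {s : Finset (Sym2 V)} (h : IsMat s)
    (hG : (s : Set (Sym2 V)) ⊆ G.edgeSet) (v w : V) :
    s(v, w) ∈ s ↔ (partner s v = w ∧ v ≠ w) := by
  have adj : ∀ a b, s(a, b) ∈ s → G.Adj a b := fun a b hab => by
    exact hG (by exact_mod_cast hab)
  constructor
  · intro hvw
    refine ⟨?_, (adj _ _ hvw).ne⟩
    have hex : ∃ w, s(v, w) ∈ s := ⟨w, hvw⟩
    unfold partner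
    rw [dif_pos hex]
    exact h.eq hex.choose_spec hvw
  · rintro ⟨h1, h2⟩
    unfold partner at h1
    split_ifs at h1 with hex
    · rw [← h1]; exact hex.choose_spec
    · exact absurd h1 h2

theorem partner_invol {V : Type*} {G : SimpleGraph V} {s : Finset (Sym2 V)} (h : IsMat s)
    (hG : (s : Set (Sym2 V)) ⊆ G.edgeSet) (v : V) : partner s (partner s v) = v := by
  by_cases hv : partner s v = v
  · rw [hv, hv]
  · have := (partner_iff h hG v (partner s v)).2 ⟨rfl, fun h => hv h.symm⟩
    rw [Sym2.eq_swap] at this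
    exact ((partner_iff h hG _ _).1 this).1

theorem partner_adj {V : Type*} {G : SimpleGraph V} {s : Finset (Sym2 V)} (h : IsMat s)
    (hG : (s : Set (Sym2 V)) ⊆ G.edgeSet) (v : V) (hv : partner s v ≠ v) :
    G.Adj v (partner s v) := by
  have := (partner_iff h hG v (partner s v)).2 ⟨rfl, fun h => hv h.symm⟩
  exact hG (by exact_mod_cast this)

theorem partner_ext {V : Type*} {G : SimpleGraph V} {s s' : Finset (Sym2 V)} (h : IsMat s)
    (hG : (s : Set (Sym2 V)) ⊆ G.edgeSet) (h' : IsMat s')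
    (hG' : (s' : Set (Sym2 V)) ⊆ G.edgeSet) (he : ∀ v, partner s v = partner s' v) : s = s' := by
  ext e
  induction e with
  | _ a b => rw [partner_iff h hG, partner_iff h' hG', he]

theorem mem_map_perm {V : Type*} {s : Finset (Sym2 V)} (π : Equiv.Perm V) (a b : V) :
    s(a, b) ∈ s.map π.toEmbedding.sym2Map ↔ s(π.symm a, π.symm b) ∈ s := by
  rw [Finset.mem_map]
  constructor
  · rintro ⟨e, he, h⟩
    induction e with
    | _ c d =>
      simp only [Function.Embedding.sym2Map_apply, Sym2.map_mk, Equiv.coe_toEmbedding] at h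
      have : Sym2.map π.symm s(π c, π d) = Sym2.map π.symm s(a, b) := by rw [h]
      simp only [Sym2.map_mk, Equiv.symm_apply_apply] at this
      rwa [← this]
  · intro h
    exact ⟨_, h, by simp⟩

theorem partner_map {V : Type*} {G : SimpleGraph V} {s : Finset (Sym2 V)} (h : IsMat s)
    (hG : (s : Set (Sym2 V)) ⊆ G.edgeSet) (π : Equiv.Perm V) (v : V) :
    partner (s.map π.toEmbedding.sym2Map) v = π (partner s (π.symm v)) := by
  have hT : ((s.map π.toEmbedding.sym2Map : Finset (Sym2 V)) : Set (Sym2 V)) ⊆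
      (⊤ : SimpleGraph V).edgeSet := by
    intro e he
    induction e with
    | _ a b =>
      have := (mem_map_perm π a b).1 (by exact_mod_cast he)
      have := ((partner_iff h hG _ _).1 this).2
      simp only [SimpleGraph.mem_edgeSet, SimpleGraph.top_adj]
      intro hab; exact this (by rw [hab])
  have hm := h.map π.toEmbedding
  have key := partner_iff hm hT v
  have key2 : ∀ w, s(v, w) ∈ s.map π.toEmbedding.sym2Map ↔ _ := fun w => mem_map_perm π v w
  by_cases hc : partner s (π.symm v) = π.symm v
  · rw [hc]
    by_contra hne
    rw [Equiv.apply_symm_apply] at hne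
    have h1 := (key2 _).1 ((key (partner (s.map π.toEmbedding.sym2Map) v)).2 ⟨rfl, fun h => hne h.symm⟩)
    have h2 := (partner_iff h hG _ _).1 h1
    rw [hc] at h2
    exact h2.2 h2.1
  · have h1 := (partner_iff h hG (π.symm v) _).2 ⟨rfl, fun h => hc h.symm⟩
    have h2 := (key2 (π (partner s (π.symm v)))).2 (by simpa using h1)
    exact ((key _).1 h2).1

theorem matchCount_le_of_embed {V W : Type*} [Finite W] (G : SimpleGraph V) (H : SimpleGraph W)
    (f : V ↪ W) (hf : ∀ a b, G.Adj a b → H.Adj (f a) (f b)) (t : ℕ) :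
    matchCount G t ≤ matchCount H t := by
  unfold matchCount
  refine Nat.card_le_card_of_injective (fun s => ⟨s.1.map f.sym2Map, ?_, ?_, ?_⟩) ?_
  · intro e he
    simp only [Finset.coe_map, Set.mem_image, Finset.mem_coe] at he
    obtain ⟨a, ha, rfl⟩ := he
    induction a with
    | _ a b =>
      have : G.Adj a b := s.2.1 (by exact_mod_cast ha)
      simpa using hf _ _ this
  · rw [Finset.card_map]; exact s.2.2.1
  · exact IsMat.map (s := s.1) s.2.2.2 f
  · intro s s' h
    simp only [Subtype.mk.injEq, Finset.map_inj] at h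
    exact Subtype.ext h

theorem matchCount_one {V : Type*} (G : SimpleGraph V) : matchCount G 1 = G.edgeSet.ncard := by
  unfold matchCount
  rw [← Nat.card_coe_set_eq]
  symm
  refine Nat.card_eq_of_bijective (fun e : G.edgeSet => ⟨{e.1}, by simp, by simp, by simp⟩) ⟨?_, ?_⟩
  · intro a b h
    simp only [Subtype.mk.injEq, Finset.singleton_inj] at h
    exact Subtype.ext h
  · rintro ⟨s, h1, h2, h3⟩
    obtain ⟨e, rfl⟩ := Finset.card_eq_one.1 h2
    exact ⟨⟨e, by simpa using h1⟩, rfl⟩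

/-- model of Kstar on V -/
def Kx {V : Type*} (x : V) (N : Finset V) : SimpleGraph V where
  Adj v w := v ≠ w ∧ (v = x → w ∈ N) ∧ (w = x → v ∈ N)
  symm := ⟨fun _ _ h => ⟨h.1.symm, h.2.2, h.2.1⟩⟩
  loopless := ⟨fun _ h => h.1 rfl⟩

open Classical in
theorem Kx_iso {V : Type*} [Fintype V] (x : V) (N : Finset V) (n k : ℕ)
    (hn : Fintype.card V = n) (hx : x ∉ N) (hN : N.card = k) (hk2 : k ≤ n - 1) (hn2 : 2 ≤ n) :
    Nonempty (Kx x N ≃g Kstar n k) := by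
  let e1 : V ≃ Fin n := Fintype.equivFinOfCardEq hn
  have hc : Fintype.card {i : Fin n // i ∈ N.map e1.toEmbedding} =
      Fintype.card {i : Fin n // i.val < k} := by
    rw [Fintype.card_coe, Finset.card_map, hN, Fintype.card_subtype]
    have := Fin.card_filter_val_lt (n := n) (m := k)
    omega
  let e2 := (Fintype.equivOfCardEq hc).extendSubtype
  have he2 : ∀ v, (e2 (e1 v)).val < k ↔ v ∈ N := by
    intro v
    constructor
    · intro h
      by_contra hv
      have := Equiv.extendSubtype_not_mem (Fintype.equivOfCardEq hc) (e1 v) (by simpa using hv)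
      exact this h
    · intro h
      exact Equiv.extendSubtype_mem (Fintype.equivOfCardEq hc) (e1 v) (by simpa using h)
  let l : Fin n := ⟨n - 1, by omega⟩
  let e : V ≃ Fin n := (e1.trans e2).trans (Equiv.swap (e2 (e1 x)) l)
  have hex : e x = l := by simp [e]
  have he : ∀ v, (e v).val < k ↔ v ∈ N := by
    intro v
    by_cases hvx : v = x
    · subst hvx; rw [hex]; simp [l, hx]; omega
    · have h1 : e2 (e1 v) ≠ e2 (e1 x) := by simpa using hvx
      by_cases h2 : e2 (e1 v) = l
      · have : e v = e2 (e1 x) := by simp [e, h2]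
        rw [this, he2, ← he2 v, h2]
        simp [l, hx]; omega
      · have : e v = e2 (e1 v) := by simp [e, Equiv.swap_apply_of_ne_of_ne h1 h2]
        rw [this, he2]
  have hel : ∀ v, (e v).val = n - 1 ↔ v = x := by
    intro v
    rw [← e.injective.eq_iff, hex, Fin.ext_iff]
  refine ⟨⟨e, ?_⟩⟩
  intro a b
  simp only [Kstar, SimpleGraph.fromRel_adj, Kx, he]
  have ha := hel a
  have hb := hel b
  have ha' := (e a).2
  have hb' := (e b).2
  have hab : e a ≠ e b ↔ a ≠ b := e.injective.ne_iff
  have h1 : (e a).val < n - 1 ↔ a ≠ x := by rw [ne_eq, ← ha]; omega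
  have h2 : (e b).val < n - 1 ↔ b ≠ x := by rw [ne_eq, ← hb]; omega
  rw [hab, h1, h2, ha, hb]
  by_cases a = x <;> by_cases b = x <;> grind

/-- the condition for type IV -/
def CondIV {V : Type*} (G : SimpleGraph V) (A : Set V) (σ : V → V) (w p u : V) : Prop :=
  (σ u ∉ A ∧ σ u ≠ u ∧ ¬ G.Adj w (σ u)) ∨ (σ u = p) ∨ (p = w ∧ σ u ∉ A)

open Classical in
theorem recover {V : Type*} (G : SimpleGraph V) (A : Set V) (x p u : V)
    (hxA : x ∈ A) (hpA : p ∈ A) (hu : u ∉ A) (hpx : p ≠ x) (hpu : G.Adj p u)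
    (σ σ' : V → V) (hσ : ∀ v, σ (σ v) = v) (hσ' : ∀ v, σ' (σ' v) = v)
    (ha : ∀ v, σ v ≠ v → G.Adj v (σ v)) (ha' : ∀ v, σ' v ≠ v → G.Adj v (σ' v))
    (w w' : V) (hw : w ∈ A) (hw' : w' ∈ A) (hwx : w ≠ x) (hwx' : w' ≠ x)
    (hs : σ x = w) (hs' : σ' x = w')
    (hC : CondIV G A σ w p u) (hC' : CondIV G A σ' w' p u)
    (heq : ∀ v, Equiv.swap w u (σ (Equiv.swap w u v)) = Equiv.swap w' u (σ' (Equiv.swap w' u v))) :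
    w = w' := by
  by_contra hne
  have hwu : w ≠ u := fun h => hu (h ▸ hw)
  have hwu' : w' ≠ u := fun h => hu (h ▸ hw')
  have e1 := heq w
  have e2 := heq w'
  have e3 := heq p
  simp only [Equiv.swap_apply_def] at e1 e2 e3
  unfold CondIV at hC hC'
  have a1 := ha w
  have a2 := ha w'
  have a3 := ha' w
  have a4 := ha' w'
  have i1 := hσ x
  have i2 := hσ' x
  have i3 := hσ u
  have i4 := hσ' u
  clear heq
  rcases hC with hC | hC | hC <;> rcases hC' with hC' | hC' | hC' <;> grind

/-- ordered cut edges -/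
abbrev CutE {V : Type*} (G : SimpleGraph V) (A : Set V) : Type _ :=
  {f : V × V // f.1 ∈ A ∧ f.2 ∉ A ∧ G.Adj f.1 f.2}

open Classical in
/-- goodness of a relabelling permutation for a matching -/
def Good {V : Type*} (G : SimpleGraph V) (A : Set V) (x u0 : V) (φ : CutE G A → V)
    (σ : V → V) (π : Equiv.Perm V) : Prop :=
  (σ x = x ∧ π = 1) ∨
  (∃ f : CutE G A, f.1.1 = x ∧ σ x = f.1.2 ∧ π = Equiv.swap f.1.2 (φ f)) ∨
  (σ x ∈ A ∧ σ x ≠ x ∧ ¬ G.Adj (σ x) u0 ∧ σ u0 = u0 ∧ π = Equiv.swap x u0) ∨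
  (σ x ∈ A ∧ σ x ≠ x ∧ ∃ f : CutE G A, f.1.1 ≠ x ∧ CondIV G A σ (σ x) f.1.1 f.1.2 ∧
    π = Equiv.swap f.1.2 (φ f) * Equiv.swap (σ x) f.1.2)

theorem exists_good {V : Type*} (G : SimpleGraph V) (A : Set V) (x p0 u0 : V)
    (hxA : x ∈ A) (hp0 : p0 ∈ A) (hu0 : u0 ∉ A) (hp0x : p0 ≠ x) (hadj : G.Adj p0 u0)
    (φ : CutE G A → V)
    (σ : V → V) (hσ : ∀ v, σ (σ v) = v) (ha : ∀ v, σ v ≠ v → G.Adj v (σ v)) :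
    ∃ π, Good G A x u0 φ σ π := by
  unfold Good
  by_cases h1 : σ x = x
  · exact ⟨_, Or.inl ⟨h1, rfl⟩⟩
  by_cases h2 : σ x ∈ A
  swap
  · exact ⟨_, Or.inr (Or.inl ⟨⟨(x, σ x), hxA, h2, ha x h1⟩, rfl, rfl, rfl⟩)⟩
  -- an auxiliary construction for a matched-across vertex
  have aux : ∀ u, u ∉ A → σ u ∈ A → ∃ π, Good G A x u0 φ σ π := by
    intro u hu hsu
    have hne : σ u ≠ u := fun h => hu (h ▸ hsu)
    have hsx : σ u ≠ x := by
      intro h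
      have := hσ u
      rw [h] at this
      exact hu (this ▸ h2)
    exact ⟨_, Or.inr (Or.inr (Or.inr ⟨h2, h1, ⟨(σ u, u), hsu, hu, (ha u hne).symm⟩, hsx,
      Or.inr (Or.inl rfl), rfl⟩))⟩
  by_cases h3 : ∃ u, u ∉ A ∧ G.Adj (σ x) u
  · obtain ⟨u, hu, hwu⟩ := h3
    by_cases h4 : σ u ∈ A
    · exact aux u hu h4
    · exact ⟨_, Or.inr (Or.inr (Or.inr ⟨h2, h1, ⟨(σ x, u), h2, hu, hwu⟩, h1,
        Or.inr (Or.inr ⟨rfl, h4⟩), rfl⟩))⟩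
  · push Not at h3
    by_cases h4 : σ u0 ∈ A
    · exact aux u0 hu0 h4
    by_cases h5 : σ u0 = u0
    · exact ⟨_, Or.inr (Or.inr (Or.inl ⟨h2, h1, h3 u0 hu0, h5, rfl⟩))⟩
    · exact ⟨_, Or.inr (Or.inr (Or.inr ⟨h2, h1, ⟨(p0, u0), hp0, hu0, hadj⟩, hp0x,
        Or.inl ⟨h4, h5, h3 _ h4⟩, rfl⟩))⟩

open Classical in
theorem good_at_x {V : Type*} (G : SimpleGraph V) (A : Set V) (x u0 : V)
    (hxA : x ∈ A) (hu0 : u0 ∉ A) (φ : CutE G A → V) (hφx : ∀ f, φ f ≠ x)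
    (σ : V → V) (hσ : ∀ v, σ (σ v) = v)
    (π : Equiv.Perm V) (h : Good G A x u0 φ σ π) :
    (π (σ (π.symm x)) = x ∧ ((σ x = x ∧ π = 1) ∨
      (σ x ∈ A ∧ σ x ≠ x ∧ ¬ G.Adj (σ x) u0 ∧ σ u0 = u0 ∧ π = Equiv.swap x u0))) ∨
    (∃ f : CutE G A, π (σ (π.symm x)) = φ f ∧
     ((f.1.1 = x ∧ π = Equiv.swap f.1.2 (φ f)) ∨
      (σ x ∈ A ∧ σ x ≠ x ∧ f.1.1 ≠ x ∧ CondIV G A σ (σ x) f.1.1 f.1.2 ∧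
    π = Equiv.swap f.1.2 (φ f) * Equiv.swap (σ x) f.1.2))) := by
  rcases h with h | ⟨f, h1, h2, h3⟩ | h | ⟨h1, h2, f, h3, h4, h5⟩
  · left
    refine ⟨?_, Or.inl h⟩
    rw [h.2]
    exact h.1
  · right
    refine ⟨f, ?_, Or.inl ⟨h1, h3⟩⟩
    have hx : x ≠ f.1.2 := fun h => f.2.2.1 (h ▸ hxA)
    rw [h3, Equiv.symm_swap, Equiv.swap_apply_of_ne_of_ne hx (hφx f).symm, h2,
      Equiv.swap_apply_left]
  · left
    refine ⟨?_, Or.inr h⟩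
    rw [h.2.2.2.2, Equiv.symm_swap, Equiv.swap_apply_left, h.2.2.2.1, Equiv.swap_apply_right]
  · right
    refine ⟨f, ?_, Or.inr ⟨h1, h2, h3, h4, h5⟩⟩
    have hx : x ≠ f.1.2 := fun h => f.2.2.1 (h ▸ hxA)
    have : π.symm x = x := by
      rw [Equiv.symm_apply_eq, h5, Equiv.Perm.mul_apply,
        Equiv.swap_apply_of_ne_of_ne h2.symm hx,
        Equiv.swap_apply_of_ne_of_ne hx (hφx f).symm]
    rw [this, h5, Equiv.Perm.mul_apply, Equiv.swap_apply_left, Equiv.swap_apply_left]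

open Classical in
theorem good_inj {V : Type*} (G : SimpleGraph V) (A : Set V) (x u0 : V)
    (hxA : x ∈ A) (hu0 : u0 ∉ A) (φ : CutE G A → V) (hφ : Function.Injective φ)
    (hφx : ∀ f, φ f ≠ x)
    (σ σ' : V → V) (hσ : ∀ v, σ (σ v) = v) (hσ' : ∀ v, σ' (σ' v) = v)
    (ha : ∀ v, σ v ≠ v → G.Adj v (σ v)) (ha' : ∀ v, σ' v ≠ v → G.Adj v (σ' v))
    (π π' : Equiv.Perm V) (h : Good G A x u0 φ σ π) (h' : Good G A x u0 φ σ' π')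
    (heq : ∀ v, π (σ (π.symm v)) = π' (σ' (π'.symm v))) : ∀ v, σ v = σ' v := by
  suffices hp : π = π' by
    subst hp
    intro v
    simpa using heq (π v)
  have key : ∀ (σ σ' : V → V), (∀ v, σ' v ≠ v → G.Adj v (σ' v)) → ∀ π π' : Equiv.Perm V,
      (∀ v, π (σ (π.symm v)) = π' (σ' (π'.symm v))) →
      (σ x ∈ A ∧ σ x ≠ x ∧ ¬ G.Adj (σ x) u0 ∧ σ u0 = u0 ∧ π = Equiv.swap x u0) →
      (σ' x = x ∧ π' = 1) → False := by
    intro σ σ' ha' π π' heq h1 h2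
    have hw : σ x ≠ u0 := fun h => hu0 (h ▸ h1.1)
    have := heq u0
    rw [h1.2.2.2.2, h2.2, Equiv.symm_swap, Equiv.swap_apply_right,
      Equiv.swap_apply_of_ne_of_ne h1.2.1 hw] at this
    change σ x = σ' u0 at this
    have h3 := ha' u0 (by rw [← this]; exact hw)
    rw [← this] at h3
    exact h1.2.2.1 h3.symm
  rcases good_at_x G A x u0 hxA hu0 φ hφx σ hσ π h with ⟨g1, g⟩ | ⟨f, g1, g⟩ <;>
  rcases good_at_x G A x u0 hxA hu0 φ hφx σ' hσ' π' h' with ⟨g1', g'⟩ | ⟨f', g1', g'⟩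
  · rcases g with g | g <;> rcases g' with g' | g'
    · rw [g.2, g'.2]
    · exact (key σ' σ ha π' π (fun v => (heq v).symm) g' g).elim
    · exact (key σ σ' ha' π π' heq g g').elim
    · rw [g.2.2.2.2, g'.2.2.2.2]
  · exact (hφx f' (by rw [← g1', ← heq, g1])).elim
  · exact (hφx f (by rw [← g1, heq, g1'])).elim
  · have hff : f = f' := hφ (by rw [← g1, ← g1', heq])
    subst hff
    rcases g with g | g <;> rcases g' with g' | g'
    · rw [g.2, g'.2]
    · exact (g'.2.2.1 g.1).elim
    · exact (g.2.2.1 g'.1).elim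
    · obtain ⟨b1, b2, b3, b4, b5⟩ := g
      obtain ⟨c1, c2, c3, c4, c5⟩ := g'
      have : σ x = σ' x := by
        refine recover G A x f.1.1 f.1.2 hxA f.2.1 f.2.2.1 b3 f.2.2.2 σ σ' hσ hσ' ha ha'
          _ _ b1 c1 b2 c2 rfl rfl b4 c4 ?_
        intro v
        have := heq (Equiv.swap f.1.2 (φ f) v)
        have s1 : π.symm (Equiv.swap f.1.2 (φ f) v) = Equiv.swap (σ x) f.1.2 v := by
          rw [Equiv.symm_apply_eq, b5]; simp
        have s2 : π'.symm (Equiv.swap f.1.2 (φ f) v) = Equiv.swap (σ' x) f.1.2 v := by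
          rw [Equiv.symm_apply_eq, c5]; simp
        rw [s1, s2, b5, c5] at this
        simpa using this
      rw [b5, c5, this]

theorem main_le {V : Type*} [Fintype V] (G : SimpleGraph V) (A : Set V) (x p0 u0 : V)
    (hxA : x ∈ A) (hp0 : p0 ∈ A) (hu0 : u0 ∉ A) (hp0x : p0 ≠ x) (hadj : G.Adj p0 u0)
    (N : Finset V) (hxN : x ∉ N)
    (φ : CutE G A → V) (hφ : Function.Injective φ) (hφN : ∀ f, φ f ∈ N) (t : ℕ) :
    matchCount G t ≤ matchCount (Kx x N) t := by
  have hφx : ∀ f, φ f ≠ x := fun f h => hxN (h ▸ hφN f)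
  have hex : ∀ s : {s : Finset (Sym2 V) // ↑s ⊆ G.edgeSet ∧ s.card = t ∧
      (s : Set (Sym2 V)).Pairwise fun e f => ∀ v, ¬(v ∈ e ∧ v ∈ f)},
      ∃ π, Good G A x u0 φ (partner s.1) π := fun s =>
    exists_good G A x p0 u0 hxA hp0 hu0 hp0x hadj φ _ (partner_invol (G := G) s.2.2.2 s.2.1)
      (partner_adj (G := G) s.2.2.2 s.2.1)
  choose perm hperm using hex
  unfold matchCount
  refine Nat.card_le_card_of_injective
    (fun s => ⟨s.1.map (perm s).toEmbedding.sym2Map, ?_, ?_, ?_⟩) ?_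
  · have hm : IsMat s.1 := s.2.2.2
    have hat : partner (s.1.map (perm s).toEmbedding.sym2Map) x = x ∨
        partner (s.1.map (perm s).toEmbedding.sym2Map) x ∈ N := by
      rw [partner_map hm s.2.1]
      rcases good_at_x G A x u0 hxA hu0 φ hφx _ (partner_invol hm s.2.1) _ (hperm s) with h | ⟨f, h, _⟩
      · exact Or.inl h.1
      · right; rw [h]; exact hφN f
    have hT : ((s.1.map (perm s).toEmbedding.sym2Map : Finset (Sym2 V)) : Set (Sym2 V)) ⊆
        (⊤ : SimpleGraph V).edgeSet := by
      intro e he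
      induction e with
      | _ a b =>
        have := (mem_map_perm (perm s) a b).1 (by exact_mod_cast he)
        have := ((partner_iff hm s.2.1 _ _).1 this).2
        simp only [SimpleGraph.mem_edgeSet, SimpleGraph.top_adj]
        intro hab; exact this (by rw [hab])
    have hx : ∀ b, s(x, b) ∈ s.1.map (perm s).toEmbedding.sym2Map → b ∈ N := by
      intro b hb
      have := (partner_iff (hm.map _) hT x b).1 hb
      rcases hat with h | h
      · exact (this.2 (by rw [← this.1, h])).elim
      · rwa [this.1] at h
    intro e he
    have he' := hT he
    induction e with
    | _ a b =>
      refine ⟨by simpa using he', ?_, ?_⟩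
      · intro h; subst h; exact hx _ (by exact_mod_cast he)
      · intro h; subst h; rw [Sym2.eq_swap] at he; exact hx _ (by exact_mod_cast he)
  · rw [Finset.card_map]; exact s.2.2.1
  · exact IsMat.map (s := s.1) s.2.2.2 _
  · intro s s' h
    simp only [Subtype.mk.injEq] at h
    have hm : IsMat s.1 := s.2.2.2
    have hm' : IsMat s'.1 := s'.2.2.2
    refine Subtype.ext (partner_ext hm s.2.1 hm' s'.2.1 ?_)
    refine good_inj G A x u0 hxA hu0 φ hφ hφx _ _ (partner_invol hm s.2.1)
      (partner_invol hm' s'.2.1) (partner_adj hm s.2.1) (partner_adj hm' s'.2.1) _ _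
      (hperm s) (hperm s') ?_
    intro v
    rw [← partner_map hm s.2.1, ← partner_map hm' s'.2.1, h]

open Classical in
theorem main_lt {V : Type*} [Fintype V] (G : SimpleGraph V) (A : Set V) (x p0 u0 y : V)
    (hxA : x ∈ A) (hp0 : p0 ∈ A) (hu0 : u0 ∉ A) (hp0x : p0 ≠ x)
    (hy : y ∉ A) (hyu : y ≠ u0)
    (N : Finset V) (hxN : x ∉ N) 
    (φ : CutE G A → V) (hφ : Function.Injective φ) (hφN : ∀ f, φ f ∈ N) :
    G.edgeSet.ncard < (Kx x N).edgeSet.ncard := by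
  -- noncut and cut edges
  let r : V → V := fun v => if v = x then u0 else v
  have hyA : y ≠ x := fun h => hy (h ▸ hxA)
  have hu0x : u0 ≠ x := fun h => hu0 (h ▸ hxA)
  let D : Set (Sym2 V) := {e | ∃ a b, G.Adj a b ∧ (a ∈ A ↔ b ∈ A) ∧ e = s(a, b)}
  let C : Set (Sym2 V) := {e | ∃ f : CutE G A, e = s(f.1.1, f.1.2)}
  let X : Set (Sym2 V) := {e | ∃ f : CutE G A, e = s(x, φ f)}
  have h1 : G.edgeSet ⊆ D ∪ C := by
    intro e he
    induction e with
    | _ a b =>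
      have he : G.Adj a b := he
      by_cases haA : a ∈ A <;> by_cases hbA : b ∈ A
      · exact Or.inl ⟨a, b, he, by simp [haA, hbA], rfl⟩
      · exact Or.inr ⟨⟨(a, b), haA, hbA, he⟩, rfl⟩
      · exact Or.inr ⟨⟨(b, a), hbA, haA, he.symm⟩, Sym2.eq_swap⟩
      · exact Or.inl ⟨a, b, he, by simp [haA, hbA], rfl⟩
  have hC : C.ncard ≤ X.ncard := by
    have hCr : C = Set.range (fun f : CutE G A => s(f.1.1, f.1.2)) := by
      ext e; simp only [C, Set.mem_ofPred_eq, Set.mem_range, eq_comm]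
    have hXr : X = Set.range (fun f : CutE G A => s(x, φ f)) := by
      ext e; simp only [X, Set.mem_ofPred_eq, Set.mem_range, eq_comm]
    rw [hCr, hXr, ← Set.image_univ, ← Set.image_univ]
    refine (Set.ncard_image_le (Set.toFinite _)).trans ?_
    rw [Set.ncard_image_of_injective]
    intro a b h
    exact hφ (Sym2.congr_right.1 h)
  have hDi : Set.InjOn (Sym2.map r) D := by
    rintro e ⟨a, b, hab, hA, rfl⟩ e' ⟨c, d, hcd, hA', rfl⟩ h
    simp only [Sym2.map_mk, r] at h
    have := hab.ne
    have := hcd.ne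
    rw [Sym2.eq_iff] at h ⊢
    grind
  have hd1 : Disjoint (Sym2.map r '' D) X := by
    rw [Set.disjoint_left]
    rintro e ⟨e', ⟨a, b, hab, hA, rfl⟩, rfl⟩ ⟨f, hf⟩
    simp only [Sym2.map_mk, r] at hf
    rw [Sym2.eq_iff] at hf
    grind
  have hne : s(p0, y) ∉ Sym2.map r '' D ∪ X := by
    rintro (⟨e', ⟨a, b, hab, hA, hh⟩, h⟩ | ⟨f, hf⟩)
    · subst hh
      simp only [Sym2.map_mk, r] at h
      rw [Sym2.eq_iff] at h
      grind
    · rw [Sym2.eq_iff] at hf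
      grind
  have hsub : insert s(p0, y) (Sym2.map r '' D ∪ X) ⊆ (Kx x N).edgeSet := by
    rintro e (rfl | ⟨e', ⟨a, b, hab, hA, rfl⟩, rfl⟩ | ⟨f, rfl⟩)
    · refine ⟨?_, ?_, ?_⟩ <;> grind
    · have := hab.ne
      refine ⟨?_, ?_, ?_⟩ <;> grind
    · have := hφN f
      refine ⟨?_, ?_, ?_⟩ <;> grind
  calc G.edgeSet.ncard ≤ (D ∪ C).ncard := Set.ncard_le_ncard h1 (Set.toFinite _)
    _ ≤ D.ncard + C.ncard := Set.ncard_union_le _ _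
    _ ≤ (Sym2.map r '' D).ncard + X.ncard := by
        rw [hDi.ncard_image]; omega
    _ = (Sym2.map r '' D ∪ X).ncard :=
        (Set.ncard_union_eq hd1 (Set.toFinite _) (Set.toFinite _)).symm
    _ < (insert s(p0, y) (Sym2.map r '' D ∪ X)).ncard := by
        rw [Set.ncard_insert_of_notMem hne (Set.toFinite _)]; omega
    _ ≤ _ := Set.ncard_le_ncard hsub (Set.toFinite _)

/-- a nontrivial cut with few edges -/
theorem exists_cut {V : Type*} [Fintype V] (G : SimpleGraph V) (k : ℕ) (hne : Nonempty V)
    (hk : edgeConn G = k) (hk1 : 1 ≤ k) :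
    ∃ A : Set V, A.Nonempty ∧ Aᶜ.Nonempty ∧ Nat.card (CutE G A) ≤ k := by
  have hs : {j | ∃ F : Set (Sym2 V), F ⊆ G.edgeSet ∧ F.ncard = j ∧
      ¬(G.deleteEdges F).Connected}.Nonempty := by
    by_contra h
    rw [Set.not_nonempty_iff_eq_empty] at h
    unfold edgeConn at hk
    rw [h, Nat.sInf_empty] at hk
    omega
  obtain ⟨F, hF, hFk, hc⟩ := Nat.sInf_mem hs
  have hFk : F.ncard = k := by rw [hFk, ← hk]; rfl
  have : ¬ (G.deleteEdges F).Preconnected := fun h => hc ⟨h⟩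
  unfold SimpleGraph.Preconnected at this
  push Not at this
  obtain ⟨a, b, hab⟩ := this
  refine ⟨{v | (G.deleteEdges F).Reachable a v}, ⟨a, SimpleGraph.Reachable.refl _⟩, ⟨b, hab⟩, ?_⟩
  rw [← hFk, ← Nat.card_coe_set_eq]
  refine Nat.card_le_card_of_injective (fun f => ⟨s(f.1.1, f.1.2), ?_⟩) ?_
  · by_contra h
    refine f.2.2.1 (SimpleGraph.Reachable.trans f.2.1 (SimpleGraph.Adj.reachable ?_))
    rw [SimpleGraph.deleteEdges_adj]
    exact ⟨f.2.2.2, h⟩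
  · intro f g h
    simp only [Subtype.mk.injEq, Sym2.eq_iff] at h
    have h1 := f.2.1
    have h2 := g.2.2.1
    rcases h with h | h
    · exact Subtype.ext (Prod.ext h.1 h.2)
    · rw [h.1] at h1; exact (h2 h1).elim

open Classical in
theorem singleton_case {V : Type*} [Fintype V] (G : SimpleGraph V) (n k : ℕ)
    (hn : Fintype.card V = n) (hn2 : 2 ≤ n) (hk2 : k ≤ n - 1)
    (hniso : ¬ Nonempty (G ≃g Kstar n k)) (x : V) (hx : (G.neighborFinset x).card ≤ k) :
    (∀ t : ℕ, t ≤ n / 2 → matchCount G t ≤ matchCount (Kstar n k) t) ∧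
    (∃ t : ℕ, t ≤ n / 2 ∧ matchCount G t < matchCount (Kstar n k) t) := by
  obtain ⟨N, hN1, hN2, hN3⟩ := Finset.exists_subsuperset_card_eq
    (s := G.neighborFinset x) (t := Finset.univ.erase x) (n := k)
    (by intro v hv; simp at hv ⊢; exact hv.ne') hx
    (by rw [Finset.card_erase_of_mem (Finset.mem_univ _), Finset.card_univ, hn]; exact hk2)
  have hxN : x ∉ N := fun h => by simpa using hN2 h
  obtain ⟨i⟩ := Kx_iso x N n k hn hxN hN3 hk2 hn2
  have hle : G ≤ Kx x N := by
    intro a b hab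
    refine ⟨hab.ne, ?_, ?_⟩
    · rintro rfl; exact hN1 (by simpa using hab)
    · rintro rfl; exact hN1 (by simpa using hab.symm)
  have hlt : G < Kx x N := by
    refine lt_of_le_of_ne hle ?_
    rintro rfl
    exact hniso ⟨i⟩
  have hK : ∀ t, matchCount (Kx x N) t ≤ matchCount (Kstar n k) t := fun t =>
    matchCount_le_of_embed _ _ i.toEquiv.toEmbedding (fun a b h => i.map_adj_iff.2 h) t
  refine ⟨fun t _ => le_trans (matchCount_le_of_embed _ _ (Function.Embedding.refl V)
    (fun a b h => hle h) t) (hK t), 1, by omega, lt_of_lt_of_le ?_ (hK 1)⟩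
  rw [matchCount_one, matchCount_one]
  exact Set.ncard_lt_ncard (SimpleGraph.edgeSet_strict_mono hlt) (Set.toFinite _)

/-- Main theorem: if `G` is connected of order `n ≥ 2` with edge connectivity `k`
(`1 ≤ k ≤ n − 1`) and `G ≇ K^k_{n-1,1}`, then `m(G,t) ≤ m(K^k_{n-1,1},t)` for all
`t ≤ ⌊n/2⌋`, with strict inequality for at least one such `t`. -/
theorem stmt17 {V : Type*} [Fintype V] (G : SimpleGraph V) (n k : ℕ)
    (hn : Fintype.card V = n) (hn2 : 2 ≤ n) (hG : G.Connected)
    (hk : edgeConn G = k) (hk1 : 1 ≤ k) (hk2 : k ≤ n - 1)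
    (hniso : ¬ Nonempty (G ≃g Kstar n k)) :
    (∀ t : ℕ, t ≤ n / 2 → matchCount G t ≤ matchCount (Kstar n k) t) ∧
    (∃ t : ℕ, t ≤ n / 2 ∧ matchCount G t < matchCount (Kstar n k) t) := by
  classical
  haveI hne : Nonempty V := hG.nonempty
  obtain ⟨A, ⟨a, ha⟩, ⟨b, hb⟩, hcut⟩ := exists_cut G k hne hk hk1
  by_cases hA : ∃ a' ∈ A, a' ≠ a
  swap
  · push Not at hA
    refine singleton_case G n k hn hn2 hk2 hniso a (le_trans ?_ hcut)
    rw [← Fintype.card_coe, ← Nat.card_eq_fintype_card]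
    refine Nat.card_le_card_of_injective (fun v => ⟨(a, v.1), ha, ?_, ?_⟩) ?_
    · have := v.2
      rw [SimpleGraph.mem_neighborFinset] at this
      intro h
      exact this.ne (hA _ h).symm
    · have := v.2
      rw [SimpleGraph.mem_neighborFinset] at this
      exact this
    · intro v w h
      exact Subtype.ext (congrArg (fun f : CutE G A => f.1.2) h)
  by_cases hB : ∃ b', b' ∉ A ∧ b' ≠ b
  swap
  · push Not at hB
    refine singleton_case G n k hn hn2 hk2 hniso b (le_trans ?_ hcut)
    rw [← Fintype.card_coe, ← Nat.card_eq_fintype_card]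
    refine Nat.card_le_card_of_injective (fun v => ⟨(v.1, b), ?_, hb, ?_⟩) ?_
    · have := v.2
      rw [SimpleGraph.mem_neighborFinset] at this
      by_contra h
      exact this.ne (hB _ h).symm
    · have := v.2
      rw [SimpleGraph.mem_neighborFinset] at this
      exact this.symm
    · intro v w h
      exact Subtype.ext (congrArg (fun f : CutE G A => f.1.1) h)
  -- a cut edge
  obtain ⟨p0, u0, hp0, hu0, hadj⟩ : ∃ p u, p ∈ A ∧ u ∉ A ∧ G.Adj p u := by
    obtain ⟨w⟩ := hG.preconnected a b
    obtain ⟨d, _, h1, h2⟩ := w.exists_boundary_dart A ha hb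
    exact ⟨_, _, h1, h2, d.adj⟩
  obtain ⟨x, hxA, hxp⟩ : ∃ x ∈ A, x ≠ p0 := by
    obtain ⟨a', h1, h2⟩ := hA
    by_cases h : a' = p0
    · exact ⟨a, ha, fun h' => h2 (h.trans h'.symm)⟩
    · exact ⟨a', h1, h⟩
  obtain ⟨y, hyA, hyu⟩ : ∃ y, y ∉ A ∧ y ≠ u0 := by
    obtain ⟨a', h1, h2⟩ := hB
    by_cases h : a' = u0
    · exact ⟨b, hb, fun h' => h2 (h.trans h'.symm)⟩
    · exact ⟨a', h1, h⟩
  obtain ⟨N, hN2, hN3⟩ := Finset.exists_subset_card_eq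
    (s := Finset.univ.erase x) (n := k)
    (by rw [Finset.card_erase_of_mem (Finset.mem_univ _), Finset.card_univ, hn]; exact hk2)
  have hxN : x ∉ N := fun h => by simpa using hN2 h
  obtain ⟨i⟩ := Kx_iso x N n k hn hxN hN3 hk2 hn2
  have hK : ∀ t, matchCount (Kx x N) t ≤ matchCount (Kstar n k) t := fun t =>
    matchCount_le_of_embed _ _ i.toEquiv.toEmbedding (fun a b h => i.map_adj_iff.2 h) t
  obtain ⟨φ⟩ : Nonempty (CutE G A ↪ N) := by
    refine Function.Embedding.nonempty_of_card_le ?_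
    rw [← Nat.card_eq_fintype_card, Fintype.card_coe, hN3]
    exact hcut
  have hinj : Function.Injective (fun f => (φ f : V)) :=
    Subtype.val_injective.comp φ.injective
  refine ⟨fun t _ => le_trans (main_le G A x p0 u0 hxA hp0 hu0 hxp.symm hadj N hxN
    (fun f => (φ f : V)) hinj (fun f => (φ f).2) t) (hK t), 1, by omega, lt_of_lt_of_le ?_ (hK 1)⟩
  rw [matchCount_one, matchCount_one]
  exact main_lt G A x p0 u0 y hxA hp0 hu0 hxp.symm hyA hyu N hxN
    (fun f => (φ f : V)) hinj (fun f => (φ f).2)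
end

section
/- Let G be a connected simple graph of order n ≥ 2 with edge connectivity k (1 ≤ k ≤ n − 1). Then Z(G) ≤ Z(K^k_{n-1,1}), with equality if and only if G is isomorphic to K^k_{n-1,1}. -/
def hsDJ {V : Type*} (e f : Sym2 V) : Prop := ∀ v, ¬(v ∈ e ∧ v ∈ f)

theorem hsDJ_symm {V : Type*} {e f : Sym2 V} (h : hsDJ e f) : hsDJ f e :=
  fun v hv => h v ⟨hv.2, hv.1⟩

open Classical in
noncomputable def hsZ {V : Type*} (E : Finset (Sym2 V)) : ℕ :=
  (E.powerset.filter (fun s : Finset (Sym2 V) => (s : Set (Sym2 V)).Pairwise hsDJ)).card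

def hsI : ℕ → ℕ
  | 0 => 1
  | 1 => 1
  | (n+2) => hsI (n+1) + (n+1) * hsI n

theorem hsI_pos (n : ℕ) : 0 < hsI n := by
  induction n using Nat.strong_induction_on with
  | _ n ih =>
    match n with
    | 0 => simp [hsI]
    | 1 => simp [hsI]
    | (n+2) => simp only [hsI]; have := ih (n+1) (by omega); omega

theorem hsI_mono (n : ℕ) : hsI n ≤ hsI (n+1) := by
  cases n with
  | zero => simp [hsI]
  | succ n => simp only [hsI]; omega

theorem hsI_mul (a b : ℕ) : hsI (a+1) * hsI (b+1) ≤ hsI (a+b+1) := by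
  induction b using Nat.strong_induction_on with
  | _ b ih =>
    match b with
    | 0 => simp [hsI]
    | 1 =>
      cases a with
      | zero => simp [hsI]
      | succ a =>
        have h1 := hsI_mono a
        have e1 : hsI (a+1+1) = hsI (a+1) + (a+1) * hsI a := by simp only [hsI]
        have e2 : hsI (a+1+1+1) = hsI (a+1+1) + (a+2) * hsI (a+1) := by simp only [hsI]
        have e3 : hsI (1+1) = 2 := by simp [hsI]
        rw [e2, e3, e1]
        nlinarith
    | (b+2) =>
      have h1 := ih (b+1) (by omega)
      have h2 := ih b (by omega)
      have e1 : hsI (b+2+1) = hsI (b+1+1) + (b+2) * hsI (b+1) := by simp only [hsI]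
      have e2 : hsI (a+(b+2)+1) = hsI (a+(b+1)+1) + (a+b+2) * hsI (a+b+1) := by
        have : a + (b+2)+1 = (a+b+1)+2 := by omega
        rw [this]; simp only [hsI]; rfl
      rw [e1, e2, mul_add]
      have h3 := Nat.mul_le_mul_left (b+2) h2
      have h4 : (b+2) * hsI (a+b+1) ≤ (a+b+2) * hsI (a+b+1) := Nat.mul_le_mul_right _ (by omega)
      nlinarith

section
variable {V : Type*}

open Classical in
theorem hsZ_mono {E F : Finset (Sym2 V)} (h : E ⊆ F) : hsZ E ≤ hsZ F := by
  unfold hsZ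
  exact Finset.card_le_card (Finset.filter_subset_filter _ (Finset.powerset_mono.2 h))

open Classical in
theorem hsZ_strict {E F : Finset (Sym2 V)} (h : E ⊂ F) : hsZ E < hsZ F := by
  unfold hsZ
  apply Finset.card_lt_card
  rw [Finset.ssubset_iff_of_subset (Finset.filter_subset_filter _ (Finset.powerset_mono.2 h.1))]
  obtain ⟨e, he, he'⟩ := Finset.exists_of_ssubset h
  exact ⟨{e}, by simp [he], by simp [he']⟩

open Classical in
theorem hsZ_empty : hsZ (∅ : Finset (Sym2 V)) = 1 := by
  simp [hsZ, Finset.filter_singleton]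

open Classical in
theorem hsZ_insert (E : Finset (Sym2 V)) (e : Sym2 V) (he : e ∉ E) :
    hsZ (insert e E) = hsZ E + hsZ (E.filter (hsDJ e)) := by
  unfold hsZ
  rw [Finset.powerset_insert, Finset.filter_union, Finset.card_union_of_disjoint]
  · congr 1
    symm
    apply Finset.card_bij (fun s _ => insert e s)
    · intro s hs
      simp only [Finset.mem_filter, Finset.mem_powerset, Finset.mem_image] at hs ⊢
      refine ⟨⟨s, hs.1.trans (Finset.filter_subset _ _), rfl⟩, ?_⟩
      rw [Finset.coe_insert]
      apply hs.2.insert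
      intro b hb _
      have := (Finset.mem_filter.1 (hs.1 hb)).2
      exact ⟨this, hsDJ_symm this⟩
    · intro s hs t ht hst
      simp only [Finset.mem_filter, Finset.mem_powerset] at hs ht
      have h1 : e ∉ s := fun h => he (Finset.filter_subset _ _ (hs.1 h))
      have h2 : e ∉ t := fun h => he (Finset.filter_subset _ _ (ht.1 h))
      rw [← Finset.erase_insert h1, hst, Finset.erase_insert h2]
    · intro t ht
      simp only [Finset.mem_filter, Finset.mem_powerset, Finset.mem_image] at ht
      obtain ⟨⟨s, hs, rfl⟩, hp⟩ := ht
      refine ⟨s, ?_, rfl⟩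
      simp only [Finset.mem_filter, Finset.mem_powerset]
      refine ⟨fun f hf => Finset.mem_filter.2 ⟨hs hf, ?_⟩, ?_⟩
      · exact hp (by simp) (by simp [hf]) (fun h => he (h ▸ hs hf))
      · exact hp.mono (by simp)
  · rw [Finset.disjoint_left]
    intro s hs hs'
    simp only [Finset.mem_filter, Finset.mem_powerset, Finset.mem_image] at hs hs'
    obtain ⟨⟨t, _, rfl⟩, _⟩ := hs'
    exact he (hs.1 (Finset.mem_insert_self _ _))

open Classical in
theorem hsZ_le (E T : Finset (Sym2 V)) (h : T ⊆ E) :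
    hsZ E ≤ hsZ (E \ T) + ∑ e ∈ T, hsZ (E.filter (hsDJ e)) := by
  induction T using Finset.induction_on with
  | empty => simp
  | insert a T ha ih =>
    have haE : a ∈ E := h (Finset.mem_insert_self _ _)
    have h1 := ih ((Finset.subset_insert _ _).trans h)
    rw [Finset.sum_insert ha]
    have h2 : E \ T = insert a (E \ insert a T) := by
      ext x; simp only [Finset.mem_sdiff, Finset.mem_insert]
      by_cases hx : x = a
      · subst hx; simp [haE, ha]
      · simp [hx]
    rw [h2, hsZ_insert _ _ (by simp)] at h1
    have h3 : hsZ ((E \ insert a T).filter (hsDJ a)) ≤ hsZ (E.filter (hsDJ a)) :=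
      hsZ_mono (Finset.filter_subset_filter _ Finset.sdiff_subset)
    omega

open Classical in
theorem hsZ_star (E T : Finset (Sym2 V)) (h : T ⊆ E) (v : V) (hv : ∀ e ∈ T, v ∈ e) :
    hsZ E = hsZ (E \ T) + ∑ e ∈ T, hsZ (E.filter (hsDJ e)) := by
  induction T using Finset.induction_on with
  | empty => simp
  | insert a T ha ih =>
    have haE : a ∈ E := h (Finset.mem_insert_self _ _)
    have h1 := ih ((Finset.subset_insert _ _).trans h)
      (fun e he => hv e (Finset.mem_insert_of_mem he))
    rw [Finset.sum_insert ha]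
    have h2 : E \ T = insert a (E \ insert a T) := by
      ext x; simp only [Finset.mem_sdiff, Finset.mem_insert]
      by_cases hx : x = a
      · subst hx; simp [haE, ha]
      · simp [hx]
    rw [h2, hsZ_insert _ _ (by simp)] at h1
    have h3 : (E \ insert a T).filter (hsDJ a) = E.filter (hsDJ a) := by
      ext x
      simp only [Finset.mem_filter, Finset.mem_sdiff]
      constructor
      · rintro ⟨⟨h, _⟩, h'⟩; exact ⟨h, h'⟩
      · rintro ⟨h, h'⟩
        exact ⟨⟨h, fun hx => h' v ⟨hv a (Finset.mem_insert_self _ _), hv x hx⟩⟩, h'⟩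
    rw [h3] at h1
    omega

variable [Fintype V]

open Classical in
noncomputable def hsK (A : Finset V) : Finset (Sym2 V) :=
  Finset.univ.filter (fun e => ¬ e.IsDiag ∧ ∀ x ∈ e, x ∈ A)

theorem mem_hsK {A : Finset V} {a b : V} : s(a,b) ∈ hsK A ↔ a ≠ b ∧ a ∈ A ∧ b ∈ A := by
  simp [hsK]

theorem hsK_empty : hsK (∅ : Finset V) = ∅ := by
  ext e
  induction e with
  | _ a b => simp [mem_hsK]

theorem hsDJ_mk {a b c d : V} : hsDJ s(a,b) s(c,d) ↔ a ≠ c ∧ a ≠ d ∧ b ≠ c ∧ b ≠ d := by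
  unfold hsDJ
  simp only [Sym2.mem_iff]
  constructor
  · intro h
    have h1 := h a
    have h2 := h b
    tauto
  · rintro h x ⟨rfl | rfl, rfl | rfl⟩ <;> tauto

open Classical in
theorem hsZ_vertex (A B : Finset V) (hAB : Disjoint A B) (v : V) (hv : v ∈ A) :
    hsZ (hsK A ∪ hsK B) = hsZ (hsK (A.erase v) ∪ hsK B) +
      ∑ w ∈ A.erase v, hsZ (hsK ((A.erase v).erase w) ∪ hsK B) := by
  have hd : ∀ x, x ∈ A → x ∈ B → False := fun x h1 h2 => Finset.disjoint_left.1 hAB h1 h2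
  rw [hsZ_star (hsK A ∪ hsK B) ((A.erase v).image (fun w => s(v,w))) _ v]
  · congr 1
    · congr 1
      ext e
      induction e with
      | _ a b =>
        have := hd v hv
        simp only [Finset.mem_sdiff, Finset.mem_union, mem_hsK, Finset.mem_image, Finset.mem_erase,
          Sym2.eq_iff]
        grind
    · rw [Finset.sum_image]
      · apply Finset.sum_congr rfl
        intro w hw
        congr 1
        ext e
        induction e with
        | _ a b =>
          have := hd v hv
          have := hd w (Finset.mem_of_mem_erase hw)
          simp only [Finset.mem_filter, Finset.mem_union, mem_hsK, Finset.mem_erase, hsDJ_mk]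
          grind
      · intro x hx y hy hxy
        simp at hxy; grind
  · intro e he
    simp only [Finset.mem_image, Finset.mem_erase] at he
    obtain ⟨w, hw, rfl⟩ := he
    simp
  · intro e he
    simp only [Finset.mem_image, Finset.mem_erase] at he
    obtain ⟨w, hw, rfl⟩ := he
    simp only [Finset.mem_union, mem_hsK]
    exact Or.inl ⟨hw.1.symm, hv, hw.2⟩

open Classical in
theorem hsZ_aux (B : Finset V) (m : ℕ) : ∀ A : Finset V, A.card = m → Disjoint A B →
    hsZ (hsK A ∪ hsK B) = hsI m * hsZ (hsK B) := by
  induction m using Nat.strong_induction_on with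
  | _ m ih =>
    intro A hA hAB
    rcases Finset.eq_empty_or_nonempty A with rfl | ⟨v, hv⟩
    · simp at hA
      subst hA
      simp [hsK_empty, hsI]
    · rw [hsZ_vertex A B hAB v hv]
      have hc : (A.erase v).card = m - 1 := by rw [Finset.card_erase_of_mem hv, hA]
      have hm : 0 < m := hA ▸ Finset.card_pos.2 ⟨v, hv⟩
      rw [ih (m-1) (by omega) _ hc (hAB.mono_left (Finset.erase_subset _ _))]
      have : ∀ w ∈ A.erase v, hsZ (hsK ((A.erase v).erase w) ∪ hsK B) =
          hsI (m-2) * hsZ (hsK B) := by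
        intro w hw
        have : 0 < m - 1 := hc ▸ Finset.card_pos.2 ⟨w, hw⟩
        apply ih (m-2) (by omega)
        · rw [Finset.card_erase_of_mem hw, hc]; omega
        · exact hAB.mono_left ((Finset.erase_subset _ _).trans (Finset.erase_subset _ _))
      rw [Finset.sum_congr rfl this, Finset.sum_const, hc, smul_eq_mul]
      match m with
      | 1 => simp [hsI]
      | (m+2) => simp [hsI]; ring

open Classical in
theorem hsZ_K (A : Finset V) : hsZ (hsK A) = hsI A.card := by
  have := hsZ_aux ∅ A.card A rfl (by simp)
  simpa [hsK_empty, hsZ_empty] using this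

open Classical in
theorem hsZ_KK (A B : Finset V) (h : Disjoint A B) :
    hsZ (hsK A ∪ hsK B) = hsI A.card * hsI B.card := by
  rw [hsZ_aux B A.card A rfl h, hsZ_K]

open Classical in
theorem hs_matching_card (s : Finset (Sym2 V)) (h1 : ∀ e ∈ s, ¬ e.IsDiag)
    (h2 : (s : Set (Sym2 V)).Pairwise hsDJ) : s.card ≤ Fintype.card V / 2 := by
  have h : (s.biUnion (fun e => e.toFinset)).card = ∑ e ∈ s, e.toFinset.card := by
    apply Finset.card_biUnion
    intro e he f hf hef
    show Disjoint e.toFinset f.toFinset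
    rw [Finset.disjoint_left]
    intro x hx hy
    rw [Sym2.mem_toFinset] at hx hy
    exact h2 he hf hef x ⟨hx, hy⟩
  rw [Finset.sum_congr rfl (fun e he => Sym2.card_toFinset_of_not_isDiag e (h1 e he))] at h
  have h' := Finset.card_le_univ (s.biUnion (fun e => e.toFinset))
  simp at h
  omega

open Classical in
theorem hosoya_eq (G : SimpleGraph V) : hosoya G = hsZ G.edgeFinset := by
  unfold hosoya hsZ
  rw [Finset.card_eq_sum_card_fiberwise (f := Finset.card)
    (t := Finset.range (Fintype.card V / 2 + 1))]
  · apply Finset.sum_congr rfl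
    intro t _
    unfold matchCount
    rw [Nat.subtype_card]
    intro s
    simp only [Finset.mem_filter, Finset.mem_powerset, ← SimpleGraph.coe_edgeFinset, Finset.coe_subset]
    unfold hsDJ
    tauto
  · intro s hs
    simp only [Finset.coe_filter, Finset.mem_powerset, Set.mem_setOf_eq] at hs
    have := hs_matching_card s
      (fun e he => G.not_isDiag_of_mem_edgeSet (SimpleGraph.mem_edgeFinset.1 (hs.1 he))) hs.2
    simp; omega
end

section
variable {V : Type*} [Fintype V]

open Classical in
theorem hs_degree_card (G : SimpleGraph V) (v : V) :
    (G.edgeFinset.filter (fun e => v ∈ e)).card = G.degree v := by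
  rw [← SimpleGraph.card_incidenceFinset_eq_degree]
  congr 1
  ext e
  simp [SimpleGraph.incidenceSet]

open Classical in
theorem hs_compl_card (e : Sym2 V) (he : ¬ e.IsDiag) :
    (Finset.univ \ e.toFinset).card = Fintype.card V - 2 := by
  rw [Finset.card_sdiff_of_subset (Finset.subset_univ _), Sym2.card_toFinset_of_not_isDiag e he,
    Finset.card_univ]

open Classical in
theorem hs_filter_sub (G : SimpleGraph V) (e : Sym2 V) :
    G.edgeFinset.filter (hsDJ e) ⊆ hsK (Finset.univ \ e.toFinset) := by
  intro f hf
  rw [Finset.mem_filter, SimpleGraph.mem_edgeFinset] at hf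
  simp only [hsK, Finset.mem_filter, Finset.mem_univ, true_and, Finset.mem_sdiff, Sym2.mem_toFinset]
  exact ⟨G.not_isDiag_of_mem_edgeSet hf.1, fun x hx hxe => hf.2 x ⟨hxe, hx⟩⟩

open Classical in
theorem hs_filter_le (G : SimpleGraph V) (e : Sym2 V) (he : e ∈ G.edgeFinset) :
    hsZ (G.edgeFinset.filter (hsDJ e)) ≤ hsI (Fintype.card V - 2) := by
  refine (hsZ_mono (hs_filter_sub G e)).trans ?_
  rw [hsZ_K, hs_compl_card e (G.not_isDiag_of_mem_edgeSet (SimpleGraph.mem_edgeFinset.1 he))]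

open Classical in
theorem hs_lemA (G : SimpleGraph V) (v : V) :
    hosoya G ≤ hsI (Fintype.card V - 1) + G.degree v * hsI (Fintype.card V - 2) ∧
    (hosoya G = hsI (Fintype.card V - 1) + G.degree v * hsI (Fintype.card V - 2) ↔
      ∀ a b, a ≠ b → a ≠ v → b ≠ v → G.Adj a b) := by
  set T := G.edgeFinset.filter (fun e => v ∈ e) with hT
  have hTE : T ⊆ G.edgeFinset := Finset.filter_subset _ _
  have hZ := hsZ_star G.edgeFinset T hTE v (fun e he => (Finset.mem_filter.1 he).2)
  have hsub : G.edgeFinset \ T ⊆ hsK (Finset.univ.erase v) := by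
    intro e
    induction e with
    | _ a b =>
      simp only [hT, Finset.mem_sdiff, Finset.mem_filter, SimpleGraph.mem_edgeFinset,
        SimpleGraph.mem_edgeSet, mem_hsK, Finset.mem_erase, Finset.mem_univ, Sym2.mem_iff]
      intro h
      have := h.1.ne
      grind
  have hK : hsZ (hsK (Finset.univ.erase v)) = hsI (Fintype.card V - 1) := by
    rw [hsZ_K, Finset.card_erase_of_mem (Finset.mem_univ _), Finset.card_univ]
  have h1 : hsZ (G.edgeFinset \ T) ≤ hsI (Fintype.card V - 1) := hK ▸ hsZ_mono hsub
  have h2 : ∑ e ∈ T, hsZ (G.edgeFinset.filter (hsDJ e)) ≤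
      G.degree v * hsI (Fintype.card V - 2) := by
    rw [← hs_degree_card, ← smul_eq_mul]
    exact Finset.sum_le_card_nsmul _ _ _ (fun e he => hs_filter_le G e (hTE he))
  rw [hosoya_eq, hZ]
  refine ⟨by omega, ?_, ?_⟩
  · intro h
    have h3 : hsZ (G.edgeFinset \ T) = hsI (Fintype.card V - 1) := by omega
    have h4 : G.edgeFinset \ T = hsK (Finset.univ.erase v) := by
      by_contra hne
      have := hsZ_strict (Finset.ssubset_iff_subset_ne.2 ⟨hsub, hne⟩)
      omega
    intro a b hab ha hb
    have : s(a,b) ∈ G.edgeFinset \ T := by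
      rw [h4, mem_hsK]; simp [hab, ha, hb]
    simpa using (Finset.mem_sdiff.1 this).1
  · intro h
    have h4 : G.edgeFinset \ T = hsK (Finset.univ.erase v) := by
      refine hsub.antisymm ?_
      intro e
      induction e with
      | _ a b =>
        simp only [hT, Finset.mem_sdiff, Finset.mem_filter, SimpleGraph.mem_edgeFinset,
          SimpleGraph.mem_edgeSet, mem_hsK, Finset.mem_erase, Finset.mem_univ, Sym2.mem_iff]
        intro h'
        have := h a b h'.1 h'.2.1.1 h'.2.2.1
        grind
    rw [h4, hK, Finset.sum_congr rfl (g := fun _ => hsI (Fintype.card V - 2)), Finset.sum_const,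
      hs_degree_card, smul_eq_mul]
    intro e he
    have hd := G.not_isDiag_of_mem_edgeSet (SimpleGraph.mem_edgeFinset.1 (hTE he))
    rw [← hs_compl_card e hd, ← hsZ_K]
    congr 1
    refine (hs_filter_sub G e).antisymm ?_
    have hve : v ∈ e := (Finset.mem_filter.1 he).2
    intro f
    induction f with
    | _ a b =>
      simp only [Finset.mem_filter, SimpleGraph.mem_edgeFinset,
          SimpleGraph.mem_edgeSet, mem_hsK, Finset.mem_sdiff, Finset.mem_univ, Sym2.mem_toFinset,
          true_and]
      rintro ⟨hab, ha, hb⟩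
      refine ⟨h a b hab (fun h => ha (h ▸ hve)) (fun h => hb (h ▸ hve)), ?_⟩
      rintro x ⟨hx, hx'⟩
      rcases Sym2.mem_iff.1 hx' with rfl | rfl
      · exact ha hx
      · exact hb hx

open Classical in
/-- the cross edges of a vertex set -/
noncomputable def hsC (G : SimpleGraph V) (S : Finset V) : Finset (Sym2 V) :=
  G.edgeFinset.filter (fun e => ∃ u ∈ S, ∃ w, w ∉ S ∧ e = s(u, w))

open Classical in
theorem mem_hsC {G : SimpleGraph V} {S : Finset V} {a b : V} :
    s(a,b) ∈ hsC G S ↔ G.Adj a b ∧ ((a ∈ S ∧ b ∉ S) ∨ (b ∈ S ∧ a ∉ S)) := by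
  simp only [hsC, Finset.mem_filter, SimpleGraph.mem_edgeFinset, SimpleGraph.mem_edgeSet,
    Sym2.eq_iff]
  grind

open Classical in
/-- any cut has at least `edgeConn` edges -/
theorem hs_cut_ge (G : SimpleGraph V) (S : Finset V) (a b : V) (ha : a ∈ S) (hb : b ∉ S) :
    edgeConn G ≤ (hsC G S).card := by
  apply Nat.sInf_le
  refine ⟨(hsC G S : Set (Sym2 V)), ?_, Set.ncard_coe_finset _, ?_⟩
  · intro e he
    exact SimpleGraph.mem_edgeFinset.1 (Finset.filter_subset _ _ he)
  · intro hc
    obtain ⟨p⟩ := hc.preconnected a b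
    obtain ⟨d, hd, h1, h2⟩ := p.exists_boundary_dart (S : Set V) (by simpa using ha)
      (by simpa using hb)
    have h3 := d.adj
    rw [SimpleGraph.deleteEdges_adj] at h3
    apply h3.2
    rw [Finset.mem_coe, mem_hsC]
    exact ⟨h3.1, Or.inl ⟨by simpa using h1, by simpa using h2⟩⟩

open Classical in
theorem hs_cut_exists (G : SimpleGraph V) (hG : G.Connected) (h : 1 ≤ edgeConn G) :
    ∃ (S : Finset V) (a b : V), a ∈ S ∧ b ∉ S ∧ (hsC G S).card = edgeConn G := by
  have hne := Nat.nonempty_of_pos_sInf h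
  obtain ⟨F, hF, hFc, hFd⟩ := Nat.sInf_mem hne
  have : Nonempty V := hG.nonempty
  rw [SimpleGraph.connected_iff] at hFd
  have hp : ¬ (G.deleteEdges F).Preconnected := fun h => hFd ⟨h, this⟩
  unfold SimpleGraph.Preconnected at hp
  push Not at hp
  obtain ⟨a, b, hab⟩ := hp
  refine ⟨Finset.univ.filter (fun w => (G.deleteEdges F).Reachable a w), a, b, by simp,
    by simpa using hab, ?_⟩
  apply le_antisymm
  · rw [← Set.ncard_coe_finset]
    refine le_trans (Set.ncard_le_ncard ?_ (Set.toFinite F)) (le_of_eq hFc)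
    intro e
    induction e with
    | _ x y =>
      rw [Finset.mem_coe, mem_hsC]
      rintro ⟨hxy, h⟩
      by_contra hnF
      have h1 : (G.deleteEdges F).Adj x y := by
        rw [SimpleGraph.deleteEdges_adj]; exact ⟨hxy, hnF⟩
      simp only [Finset.mem_filter, Finset.mem_univ, true_and] at h
      rcases h with ⟨h2, h3⟩ | ⟨h2, h3⟩
      · exact h3 (h2.trans h1.reachable)
      · exact h3 (h2.trans h1.symm.reachable)
  · exact hs_cut_ge G _ a b (by simp) (by simpa using hab)

open Classical in
theorem hs_singleton_cut (G : SimpleGraph V) (v : V) : (hsC G {v}).card = G.degree v := by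
  rw [← hs_degree_card]
  congr 1
  ext e
  induction e with
  | _ a b =>
    rw [mem_hsC]
    simp only [Finset.mem_singleton, Finset.mem_filter, SimpleGraph.mem_edgeFinset,
      SimpleGraph.mem_edgeSet, Sym2.mem_iff]
    have : G.Adj a b → a ≠ b := fun h => h.ne
    grind

open Classical in
/-- if all vertices of `S` have a cross edge then degrees in `S` are at most the cut size -/
theorem hs_degree_le (G : SimpleGraph V) (S : Finset V)
    (h : ∀ x ∈ S, ∃ y, y ∉ S ∧ G.Adj x y) (u : V) (hu : u ∈ S) :
    G.degree u ≤ (hsC G S).card := by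
  choose! f hf using h
  rw [← SimpleGraph.card_neighborFinset_eq_degree]
  apply Finset.card_le_card_of_injOn (fun w => if w ∈ S then s(w, f w) else s(u, w))
  · intro w hw
    have hw' : G.Adj u w := by simpa using hw
    simp only
    split_ifs with hS
    · rw [Finset.mem_coe, mem_hsC]; exact ⟨(hf w hS).2, Or.inl ⟨hS, (hf w hS).1⟩⟩
    · rw [Finset.mem_coe, mem_hsC]; exact ⟨hw', Or.inl ⟨hu, hS⟩⟩
  · intro w hw w' hw' heq
    have h1 : G.Adj u w := by simpa using hw
    have h2 : G.Adj u w' := by simpa using hw'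
    have := h1.ne
    have := h2.ne
    have := hf w
    have := hf w'
    simp only at heq
    split_ifs at heq <;> rw [Sym2.eq_iff] at heq <;> grind

open Classical in
theorem hs_strict (G : SimpleGraph V) (k : ℕ) (hG : G.Connected)
    (hk : edgeConn G = k) (hk1 : 1 ≤ k) (hdeg : ∀ v, G.degree v ≠ k) :
    hosoya G < hsI (Fintype.card V - 1) + k * hsI (Fintype.card V - 2) := by
  obtain ⟨S, a, b, ha, hb, hS⟩ := hs_cut_exists G hG (hk ▸ hk1)
  rw [hk] at hS
  obtain ⟨x, hxS, hx⟩ : ∃ x ∈ S, ∀ y, y ∉ S → ¬ G.Adj x y := by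
    by_contra hcon
    push Not at hcon
    have h1 := hs_degree_le G S hcon a ha
    have h2 := hs_cut_ge G {a} a b (by simp) (by rintro h; simp at h; exact hb (h ▸ ha))
    rw [hs_singleton_cut] at h2
    exact hdeg a (by omega)
  have hTE : hsC G S ⊆ G.edgeFinset := Finset.filter_subset _ _
  have hZ := hsZ_le G.edgeFinset (hsC G S) hTE
  have h1 : hsZ (G.edgeFinset \ hsC G S) ≤ hsI (Fintype.card V - 1) := by
    have hsub : G.edgeFinset \ hsC G S ⊆ hsK S ∪ hsK Sᶜ := by
      intro e
      induction e with
      | _ p q =>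
        simp only [Finset.mem_sdiff, SimpleGraph.mem_edgeFinset,
          SimpleGraph.mem_edgeSet, mem_hsK, Finset.mem_union, mem_hsC, Finset.mem_compl]
        intro h
        have := h.1.ne
        grind
    refine (hsZ_mono hsub).trans ?_
    rw [hsZ_KK _ _ disjoint_compl_right]
    have c1 : 0 < S.card := Finset.card_pos.2 ⟨a, ha⟩
    have c2 : 0 < Sᶜ.card := Finset.card_pos.2 ⟨b, by simpa using hb⟩
    have c3 := Finset.card_add_card_compl S
    have := hsI_mul (S.card - 1) (Sᶜ.card - 1)
    rw [show S.card - 1 + 1 = S.card by omega, show Sᶜ.card - 1 + 1 = Sᶜ.card by omega,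
      show S.card - 1 + (Sᶜ.card - 1) + 1 = Fintype.card V - 1 by omega] at this
    exact this
  have h2 : ∑ e ∈ hsC G S, hsZ (G.edgeFinset.filter (hsDJ e)) <
      k * hsI (Fintype.card V - 2) := by
    rw [← hS, ← smul_eq_mul, ← Finset.sum_const]
    apply Finset.sum_lt_sum_of_nonempty (Finset.card_pos.1 (by omega))
    intro e he
    have heE := hTE he
    rw [← hs_compl_card e (G.not_isDiag_of_mem_edgeSet (SimpleGraph.mem_edgeFinset.1 heE)),
      ← hsZ_K]
    apply hsZ_strict
    refine Finset.ssubset_iff_subset_ne.2 ⟨hs_filter_sub G e, ?_⟩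
    obtain ⟨u, hu, w, hw, rfl⟩ := (Finset.mem_filter.1 he).2
    have hadj : G.Adj u w := by simpa using heE
    obtain ⟨y, hy, hyw⟩ : ∃ y, y ∉ S ∧ y ≠ w := by
      by_contra hcon
      push Not at hcon
      have hSw : hsC G S = hsC G {w} := by
        ext e
        induction e with
        | _ p q =>
          simp only [mem_hsC, Finset.mem_singleton]
          have := hcon p
          have := hcon q
          have : G.Adj p q → p ≠ q := fun h => h.ne
          grind
      apply hdeg w
      rw [← hs_singleton_cut, ← hSw, hS]
    intro heq
    have hmem : s(x, y) ∈ hsK (Finset.univ \ (s(u,w)).toFinset) := by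
      rw [mem_hsK]
      simp only [Finset.mem_sdiff, Finset.mem_univ, true_and, Sym2.mem_toFinset, Sym2.mem_iff]
      have : x ≠ u := fun h => hx w hw (h ▸ hadj)
      grind
    rw [← heq, Finset.mem_filter] at hmem
    exact hx y hy (by simpa using hmem.1)
  rw [hosoya_eq]
  omega

end

theorem Kstar_adj_off (n k : ℕ) (hn2 : 2 ≤ n) (a b : Fin n) (hab : a ≠ b)
    (ha : a ≠ ⟨n-1, by omega⟩) (hb : b ≠ ⟨n-1, by omega⟩) : (Kstar n k).Adj a b := by
  have h1 := a.2
  have h2 := b.2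
  simp only [ne_eq, Fin.ext_iff] at ha hb
  simp only [Kstar, SimpleGraph.fromRel_adj]
  exact ⟨hab, Or.inl (Or.inl ⟨by omega, by omega⟩)⟩

theorem Kstar_adj_last (n k : ℕ) (hn2 : 2 ≤ n) (hk2 : k ≤ n - 1) (a : Fin n) :
    (Kstar n k).Adj ⟨n-1, by omega⟩ a ↔ a.val < k := by
  have h1 := a.2
  simp only [Kstar, SimpleGraph.fromRel_adj, ne_eq, Fin.ext_iff]
  constructor
  · rintro ⟨h, h' | h'⟩ <;> omega
  · intro h
    exact ⟨by omega, Or.inr (Or.inr ⟨h, trivial⟩)⟩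

open Classical in
theorem Kstar_degree (n k : ℕ) (hn2 : 2 ≤ n) (hk2 : k ≤ n - 1) :
    (Kstar n k).degree ⟨n-1, by omega⟩ = k := by
  rw [← SimpleGraph.card_neighborFinset_eq_degree]
  have : (Kstar n k).neighborFinset ⟨n-1, by omega⟩ = Finset.univ.filter (fun a : Fin n => a.val < k) := by
    ext a
    simp [Kstar_adj_last n k hn2 hk2 a]
  rw [this, Fin.card_filter_val_lt]
  omega

open Classical in
theorem hs_iso_exists {V W : Type*} [Fintype V] [Fintype W] (G : SimpleGraph V) (H : SimpleGraph W)
    (v : V) (w : W) (hc : Fintype.card V = Fintype.card W) (hd : G.degree v = H.degree w)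
    (hG : ∀ a b, a ≠ b → a ≠ v → b ≠ v → G.Adj a b)
    (hH : ∀ a b, a ≠ b → a ≠ w → b ≠ w → H.Adj a b) : Nonempty (G ≃g H) := by
  have hcard : ∀ c : Option Bool,
      Fintype.card {a // (if a = v then none else some (decide (G.Adj v a))) = c} =
      Fintype.card {b // (if b = w then none else some (decide (H.Adj w b))) = c} := by
    have t1 : (Finset.univ.filter (fun a => a = v)).card = (Finset.univ.filter (fun a => a = w)).card := by
      rw [Finset.card_eq_one.2 ⟨v, by ext; simp⟩, Finset.card_eq_one.2 ⟨w, by ext; simp⟩]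
    have t2 : (Finset.univ.filter (fun a => G.Adj v a)).card = (Finset.univ.filter (fun a => H.Adj w a)).card := by
      rw [← SimpleGraph.card_neighborFinset_eq_degree, ← SimpleGraph.card_neighborFinset_eq_degree] at hd
      simpa [SimpleGraph.neighborFinset_eq_filter] using hd
    have u1 : (Finset.univ.filter (fun a => a = v ∨ G.Adj v a)).card =
        (Finset.univ.filter (fun a => a = w ∨ H.Adj w a)).card := by
      rw [Finset.filter_or, Finset.filter_or, Finset.card_union_of_disjoint,
        Finset.card_union_of_disjoint, t1, t2]
      · rw [Finset.disjoint_left]; simp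
      · rw [Finset.disjoint_left]; simp
    have t3 : (Finset.univ.filter (fun a => ¬ (a = v ∨ G.Adj v a))).card =
        (Finset.univ.filter (fun a => ¬ (a = w ∨ H.Adj w a))).card := by
      have p1 := Finset.card_filter_add_card_filter_not (s := Finset.univ) (fun a => a = v ∨ G.Adj v a)
      have p2 := Finset.card_filter_add_card_filter_not (s := Finset.univ) (fun a => a = w ∨ H.Adj w a)
      rw [Finset.card_univ] at p1 p2
      omega
    have gv := G.loopless
    intro c
    rw [Fintype.card_subtype, Fintype.card_subtype]
    rcases c with _ | _ | _
    · convert t1 using 3 <;> simp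
    · convert t3 using 3 <;> (rename_i x; split_ifs <;> simp_all)
    · convert t2 using 3 <;> (rename_i x; split_ifs <;> simp_all)
  let fV : V → Option Bool := fun a => if a = v then none else some (decide (G.Adj v a))
  let fW : W → Option Bool := fun b => if b = w then none else some (decide (H.Adj w b))
  let e := Equiv.ofFiberEquiv (f := fV) (g := fW) (fun c => Fintype.equivOfCardEq (hcard c))
  have he : ∀ a, (if e a = w then none else some (decide (H.Adj w (e a)))) =
      (if a = v then none else some (decide (G.Adj v a))) := fun a =>
    Equiv.ofFiberEquiv_map (f := fV) (g := fW) _ a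
  have hw : ∀ a, e a = w ↔ a = v := by
    intro a
    have := he a
    split_ifs at this <;> simp_all
  have hadj : ∀ a, H.Adj w (e a) ↔ G.Adj v a := by
    intro a
    have h1 := he a
    have h2 := hw a
    by_cases hav : a = v
    · rw [h2.2 hav, hav]; simp
    · rw [if_neg hav, if_neg (fun h => hav (h2.1 h))] at h1
      simpa using h1
  refine ⟨⟨e, ?_⟩⟩
  intro a b
  by_cases hab : a = b
  · subst hab; simp
  have hab' : e a ≠ e b := fun h => hab (e.injective h)
  by_cases hav : a = v
  · rw [(hw a).2 hav, hadj, hav]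
  by_cases hbv : b = v
  · rw [(hw b).2 hbv, SimpleGraph.adj_comm, hadj, hbv, SimpleGraph.adj_comm]
  · exact ⟨fun _ => hG a b hab hav hbv,
      fun _ => hH _ _ hab' (fun h => hav ((hw a).1 h)) (fun h => hbv ((hw b).1 h))⟩

/-- If `G` is connected of order `n ≥ 2` with edge connectivity `k` (`1 ≤ k ≤ n − 1`),
then `Z(G) ≤ Z(K^k_{n-1,1})`, with equality iff `G ≅ K^k_{n-1,1}`. -/
theorem stmt18 {V : Type*} [Fintype V] (G : SimpleGraph V) (n k : ℕ)
    (hn : Fintype.card V = n) (hn2 : 2 ≤ n) (hG : G.Connected)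
    (hk : edgeConn G = k) (hk1 : 1 ≤ k) (hk2 : k ≤ n - 1) :
    hosoya G ≤ hosoya (Kstar n k) ∧
    (hosoya G = hosoya (Kstar n k) ↔ Nonempty (G ≃g Kstar n k)) := by
  classical
  have hK := (hs_lemA (Kstar n k) ⟨n-1, by omega⟩).2.2 (Kstar_adj_off n k hn2)
  have hKd : (Kstar n k).degree ⟨n-1, by omega⟩ = k := by
    convert Kstar_degree n k hn2 hk2
  rw [hKd, Fintype.card_fin] at hK
  have hback : Nonempty (G ≃g Kstar n k) → (∃ v, G.degree v = k) ∧
      hosoya G = hosoya (Kstar n k) := by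
    rintro ⟨f⟩
    have hd : G.degree (f.symm ⟨n-1, by omega⟩) = k := by
      refine Eq.trans ?_ hKd
      exact f.symm.degree_eq _
    refine ⟨⟨_, hd⟩, ?_⟩
    have h := (hs_lemA G (f.symm ⟨n-1, by omega⟩)).2.2 (by
      intro a b hab ha hb
      rw [← f.map_adj_iff]
      apply Kstar_adj_off n k hn2
      · exact fun h => hab (f.injective h)
      · exact fun h => ha (by rw [← h]; simp)
      · exact fun h => hb (by rw [← h]; simp))
    rw [hd, hn] at h
    rw [h, hK]
  by_cases hdeg : ∃ v, G.degree v = k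
  · obtain ⟨v, hv⟩ := hdeg
    have hA := hs_lemA G v
    rw [hv, hn, ← hK] at hA
    refine ⟨hA.1, fun h => ?_, fun h => (hback h).2⟩
    exact hs_iso_exists G (Kstar n k) v ⟨n-1, by omega⟩ (by simp [hn]) (by rw [hv, hKd])
      (hA.2.1 h) (Kstar_adj_off n k hn2)
  · have hS := hs_strict G k hG hk hk1 (fun v h => hdeg ⟨v, by convert h⟩)
    rw [hn, ← hK] at hS
    exact ⟨hS.le, fun h => absurd h hS.ne, fun h => absurd (hback h).1 hdeg⟩
end
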